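/- For every nondegenerate Orlicz function M, the following statements are equivalent: (1) there exists a constant η > 0 such that lim_{t→0} M(ηt)/M(t) = 0; (2) the Orlicz sequence space h_M embeds isomorphically into C(ω^ω); (3) the Orlicz sequence space h_M embeds isomorphically into C(α) for some countable ordinal α. -/

import Mathlib

open Ordinal Filter Topology

/-- Membership in the Orlicz sequence space `h_M` : `Σₖ M (c * |aₖ|) < ∞` for every
`c < ∞`. -/
def MemHM (M : ℝ → ℝ) (a : ℕ → ℝ) : Prop :=
  ∀ c : ℝ, Summable fun k => M (c * |a k|)

/-- The Orlicz norm `‖a‖_M = inf { ρ > 0 : Σₖ M (|aₖ| / ρ) ≤ 1 }`. -/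
noncomputable def orliczNorm (M : ℝ → ℝ) (a : ℕ → ℝ) : ℝ :=
  sInf {ρ : ℝ | 0 < ρ ∧ (∑' k, M (|a k| / ρ)) ≤ 1}

/-- `M` is a nondegenerate Orlicz function : increasing and convex on `[0, ∞)` with
`M 0 = 0`, `M 1 = 1`, and `M t > 0` for all `t > 0`. -/
structure IsOrlicz (M : ℝ → ℝ) : Prop where
  mono : MonotoneOn M (Set.Ici 0)
  convex : ConvexOn ℝ (Set.Ici 0) M
  zero : M 0 = 0
  one : M 1 = 1
  pos : ∀ t : ℝ, 0 < t → 0 < M t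

/-- `C(α)` : the Banach space of continuous real functions on the compact space
`α + 1 = [0, α]` (every continuous function on a compact space is bounded, so this is
the space of bounded continuous functions on `[0, α]` with the sup norm). -/
noncomputable abbrev COrd (α : Ordinal) : Type 2 :=
  BoundedContinuousFunction ↥(Set.Iic α) ℝ

/-- `h_M` embeds isomorphically into `C(α)` : there is a map `T`, linear on `h_M`,
which is bounded above and below with respect to the Orlicz norm. -/
noncomputable def EmbedsHM (M : ℝ → ℝ) (α : Ordinal) : Prop :=
  ∃ T : (ℕ → ℝ) → COrd α,
    (∀ a b : ℕ → ℝ, MemHM M a → MemHM M b → T (a + b) = T a + T b) ∧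
    (∀ (c : ℝ) (a : ℕ → ℝ), MemHM M a → T (c • a) = c • T a) ∧
    ∃ c₁ > (0 : ℝ), ∃ c₂ > (0 : ℝ), ∀ a : ℕ → ℝ, MemHM M a →
      c₁ * orliczNorm M a ≤ ‖T a‖ ∧ ‖T a‖ ≤ c₂ * orliczNorm M a

/-- The first uncountable ordinal. -/
noncomputable def omega1 : Ordinal := (Cardinal.aleph 1).ord

/-!
(1) ⇒ (2): Split the interval of small positive numbers into levels on which `M (η t) / M t` is at
most `2⁻ⁱ⁻¹`. If `∑ M (η |xₖ|) > 1` and the `xₖ` are small, then `∑ M |xₖ| > 1` already over the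
coordinates of one level `i`. A subset of them with sum in `(1, 2]` has bounded cardinality, and
rounding the slopes `M t / t` to powers of two gives a functional norming `x` which is a sequence
with boundedly many nonzero terms in a finite set. The sequences with at most `n` such terms are a
continuous image of `[0, ω ^ n]`, and for `i → ∞` these families shrink to `0`, so that all the
norming functionals together are a continuous image of `[0, ω ^ ω]`.

(3) ⇒ (1): For countable `α`, the images of the unit vectors have a pointwise convergent
subsequence, and differences of its members form a pointwise null sequence `v` in `C(α)` satisfying
estimates of Orlicz type with constants `c₁`, `c₂`. Let `c₂ η < c₁` and suppose
`δ M (tᵢ) ≤ M (η tᵢ)` with `tᵢ → 0` fast. Take disjoint blocks of about `1 / M (η tᵢ)` members of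
`v`, so far out that the block sums are pointwise null. By Mazur's lemma there are convex weights
`wᵢ` such that at every point the blocks which are not negligible have small total weight. Keep a
proportion `wᵢ` of block `i`, with coefficients `η tᵢ`. The modular of the resulting vector exceeds
`1`, so its norm is at least `c₁`. At each point, however, the blocks that matter have modular at
most `1` after division by `η`, so the norm is at most `c₂ η` up to an arbitrarily small error.
-/

section OrliczFunction

variable {M : ℝ → ℝ} {a b : ℕ → ℝ}

namespace IsOrlicz

theorem nonneg (hM : IsOrlicz M) {t : ℝ} (ht : 0 ≤ t) : 0 ≤ M t :=
  hM.zero ▸ hM.mono Set.self_mem_Ici ht ht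

theorem map_mul_le (hM : IsOrlicz M) {s t : ℝ} (hs : 0 ≤ s) (hs1 : s ≤ 1) (ht : 0 ≤ t) :
    M (s * t) ≤ s * M t := by
  simpa [hM.zero] using
    hM.convex.2 (Set.self_mem_Ici (a := (0 : ℝ))) ht (sub_nonneg.2 hs1) hs (sub_add_cancel 1 s)

theorem map_le_self (hM : IsOrlicz M) {t : ℝ} (ht : 0 ≤ t) (ht1 : t ≤ 1) : M t ≤ t := by
  simpa [hM.one] using hM.map_mul_le ht ht1 zero_le_one

theorem self_le_map (hM : IsOrlicz M) {t : ℝ} (ht : 1 ≤ t) : t ≤ M t := by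
  have ht0 : 0 < t := one_pos.trans_le ht
  have h := hM.map_mul_le (inv_nonneg.2 ht0.le) (inv_le_one_of_one_le₀ ht) ht0.le
  rwa [inv_mul_cancel₀ ht0.ne', hM.one, inv_mul_eq_div, one_le_div ht0] at h

theorem div_mul_le_add (hM : IsOrlicz M) {s t : ℝ} (hs : 0 < s) (ht : 0 ≤ t) :
    M s / s * t ≤ M t + M s := by
  rcases le_total t s with hts | hst
  · calc M s / s * t = M s * (t / s) := by ring
      _ ≤ M s := mul_le_of_le_one_right (hM.nonneg hs.le) ((div_le_one hs).2 hts)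
      _ ≤ M t + M s := le_add_of_nonneg_left (hM.nonneg ht)
  · have ht0 : 0 < t := hs.trans_le hst
    have h := hM.map_mul_le (div_nonneg hs.le ht) ((div_le_one ht0).2 hst) ht
    rw [div_mul_cancel₀ s ht0.ne'] at h
    calc M s / s * t ≤ s / t * M t / s * t := by gcongr
      _ = M t := by field_simp
      _ ≤ M t + M s := le_add_of_nonneg_right (hM.nonneg hs.le)

theorem tendsto_nhdsGT_zero (hM : IsOrlicz M) : Tendsto M (𝓝[>] 0) (𝓝 0) := by
  refine tendsto_of_tendsto_of_tendsto_of_le_of_le' tendsto_const_nhds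
    (tendsto_nhdsWithin_of_tendsto_nhds tendsto_id) ?_ ?_
  · filter_upwards [self_mem_nhdsWithin] with t ht using hM.nonneg (Set.mem_Ioi.1 ht).le
  · filter_upwards [Ioc_mem_nhdsGT one_pos] with t ht using hM.map_le_self ht.1.le ht.2

theorem tendsto_div_self (hM : IsOrlicz M) {η : ℝ} (hη : 0 < η)
    (h : Tendsto (fun t => M (η * t) / M t) (𝓝[>] 0) (𝓝 0)) :
    Tendsto (fun t => M t / t) (𝓝[>] 0) (𝓝 0) := by
  have hscale : Tendsto (fun t : ℝ => t / η) (𝓝[>] 0) (𝓝[>] 0) := by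
    refine tendsto_nhdsWithin_iff.2 ⟨tendsto_nhdsWithin_of_tendsto_nhds ?_, ?_⟩
    · simpa using (continuous_id.div_const η).tendsto (0 : ℝ)
    · filter_upwards [self_mem_nhdsWithin] with t ht using div_pos ht hη
  have hbound : Tendsto (fun t => M (η * (t / η)) / M (t / η) / η) (𝓝[>] 0) (𝓝 0) := by
    simpa using (h.comp hscale).div_const η
  refine tendsto_of_tendsto_of_tendsto_of_le_of_le' tendsto_const_nhds hbound ?_ ?_
  · filter_upwards [self_mem_nhdsWithin] with t ht
    exact div_nonneg (hM.nonneg (Set.mem_Ioi.1 ht).le) (Set.mem_Ioi.1 ht).le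
  · filter_upwards [Ioc_mem_nhdsGT hη] with t ht
    have hs : 0 < t / η := div_pos ht.1 hη
    have hMs : 0 < M (t / η) := hM.pos _ hs
    have hle : M (t / η) ≤ t / η := hM.map_le_self hs.le ((div_le_one hη).2 ht.2)
    rw [mul_div_cancel₀ t hη.ne', div_div]
    refine div_le_div_of_nonneg_left (hM.nonneg ht.1.le) (mul_pos hMs hη) ?_
    exact (le_div_iff₀ hη).1 hle

end IsOrlicz

/-- Membership in `h_M`, tested on nonnegative dilations only. This is weaker than `MemHM`, whose
negative dilations involve the values of `M` on the negative half-line, where an Orlicz function is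
unconstrained. -/
def MemOrliczHeart (M : ℝ → ℝ) (a : ℕ → ℝ) : Prop :=
  ∀ c : ℝ, 0 ≤ c → Summable fun k => M (c * |a k|)

theorem MemHM.memOrliczHeart (ha : MemHM M a) : MemOrliczHeart M a := fun c _ => ha c

theorem IsOrlicz.memHM_of_finite_support (hM : IsOrlicz M) (ha : a.support.Finite) :
    MemHM M a := fun c =>
  summable_of_hasFiniteSupport <| ha.subset fun k hk hak => hk <| by simp [hak, hM.zero]

namespace MemOrliczHeart

theorem summable_div (ha : MemOrliczHeart M a) {ρ : ℝ} (hρ : 0 ≤ ρ) :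
    Summable fun k => M (|a k| / ρ) := by
  simpa only [div_eq_inv_mul] using ha ρ⁻¹ (inv_nonneg.2 hρ)

theorem smul (ha : MemOrliczHeart M a) (t : ℝ) : MemOrliczHeart M (t • a) := fun c hc => by
  simpa only [Pi.smul_apply, _root_.smul_eq_mul, abs_mul, mul_assoc] using
    ha (c * |t|) (mul_nonneg hc (abs_nonneg t))

theorem add (hM : IsOrlicz M) (ha : MemOrliczHeart M a) (hb : MemOrliczHeart M b) :
    MemOrliczHeart M (a + b) := fun c hc => by
  refine Summable.of_nonneg_of_le (fun k => hM.nonneg (by positivity)) (fun k => ?_)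
    ((ha (2 * c) (by positivity)).add (hb (2 * c) (by positivity)))
  calc M (c * |(a + b) k|) ≤ M (max (2 * c * |a k|) (2 * c * |b k|)) := by
        refine hM.mono (Set.mem_Ici.2 (by positivity))
          (Set.mem_Ici.2 (le_max_of_le_left (by positivity))) ?_
        rw [← mul_max_of_nonneg _ _ (by positivity : 0 ≤ 2 * c), mul_comm 2, mul_assoc]
        refine mul_le_mul_of_nonneg_left ((abs_add_le _ _).trans ?_) hc
        linarith [le_max_left |a k| |b k|, le_max_right |a k| |b k|]
    _ ≤ M (2 * c * |a k|) + M (2 * c * |b k|) := by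
        have ha' := hM.nonneg (by positivity : 0 ≤ 2 * c * |a k|)
        have hb' := hM.nonneg (by positivity : 0 ≤ 2 * c * |b k|)
        rcases max_choice (2 * c * |a k|) (2 * c * |b k|) with h | h <;> rw [h] <;> linarith

theorem indicator (hM : IsOrlicz M) (ha : MemOrliczHeart M a) (s : Set ℕ) :
    MemOrliczHeart M (s.indicator a) := fun c hc => by
  refine ((ha c hc).indicator s).congr fun k => ?_
  by_cases hk : k ∈ s <;> simp [hk, hM.zero]

end MemOrliczHeart

theorem orliczNorm_nonneg (M : ℝ → ℝ) (a : ℕ → ℝ) : 0 ≤ orliczNorm M a :=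
  Real.sInf_nonneg fun _ h => h.1.le

theorem orliczNorm_le {ρ : ℝ} (hρ : 0 < ρ) (h : ∑' k, M (|a k| / ρ) ≤ 1) : orliczNorm M a ≤ ρ :=
  csInf_le ⟨0, fun _ h => h.1.le⟩ ⟨hρ, h⟩

namespace IsOrlicz

theorem nonempty_setOf_tsum_div_le_one (hM : IsOrlicz M) (ha : MemOrliczHeart M a) :
    {ρ : ℝ | 0 < ρ ∧ ∑' k, M (|a k| / ρ) ≤ 1}.Nonempty := by
  have hsum : Summable fun k => M |a k| := by simpa using ha 1 zero_le_one
  set ρ := max 1 (∑' k, M |a k|)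
  have hρ1 : 1 ≤ ρ := le_max_left _ _
  have hρ : 0 < ρ := one_pos.trans_le hρ1
  refine ⟨ρ, hρ, ?_⟩
  calc ∑' k, M (|a k| / ρ) ≤ ∑' k, ρ⁻¹ * M |a k| := by
        refine (ha.summable_div hρ.le).tsum_le_tsum (fun k => ?_) (hsum.mul_left _)
        rw [div_eq_inv_mul]
        exact hM.map_mul_le (inv_nonneg.2 hρ.le) (inv_le_one_of_one_le₀ hρ1) (abs_nonneg _)
    _ = ρ⁻¹ * ∑' k, M |a k| := tsum_mul_left
    _ ≤ ρ⁻¹ * ρ := by gcongr; exact le_max_right _ _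
    _ = 1 := inv_mul_cancel₀ hρ.ne'

theorem tsum_div_le_one_of_orliczNorm_lt (hM : IsOrlicz M) (ha : MemOrliczHeart M a) {r : ℝ}
    (hr : orliczNorm M a < r) : ∑' k, M (|a k| / r) ≤ 1 := by
  obtain ⟨ρ, ⟨hρ, hsum⟩, hρr⟩ := exists_lt_of_csInf_lt (hM.nonempty_setOf_tsum_div_le_one ha) hr
  have hr0 : 0 < r := hρ.trans hρr
  refine ((ha.summable_div hr0.le).tsum_le_tsum (fun k => ?_) (ha.summable_div hρ.le)).trans hsum
  exact hM.mono (div_nonneg (abs_nonneg _) hr0.le) (div_nonneg (abs_nonneg _) hρ.le) (by gcongr)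

theorem le_orliczNorm (hM : IsOrlicz M) (ha : MemOrliczHeart M a) {r : ℝ}
    (h : 1 < ∑' k, M (|a k| / r)) : r ≤ orliczNorm M a :=
  le_of_not_gt fun hr => h.not_ge (hM.tsum_div_le_one_of_orliczNorm_lt ha hr)

theorem exists_orliczNorm_indicator_compl_le (hM : IsOrlicz M) (a : ℕ → ℝ) {ε : ℝ} (hε : 0 < ε) :
    ∃ F : Finset ℕ, orliczNorm M ((F : Set ℕ)ᶜ.indicator a) ≤ ε := by
  obtain ⟨F, hF⟩ := ((tendsto_order.1 (tendsto_tsum_compl_atTop_zero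
    fun k => M (|a k| / ε))).2 1 one_pos).exists
  have htail : ∑' k : ↥(F : Set ℕ)ᶜ, M (|a k| / ε) =
      ∑' k, M (|(F : Set ℕ)ᶜ.indicator a k| / ε) := by
    rw [tsum_subtype _ fun k => M (|a k| / ε)]
    refine tsum_congr fun k => ?_
    by_cases hk : k ∈ (F : Set ℕ)ᶜ <;> simp [hk, hM.zero]
  exact ⟨F, orliczNorm_le hε (htail.ge.trans hF.le)⟩

end IsOrlicz

end OrliczFunction

/-- The closed ball of radius `C` of the dual of `h_M`, as sequences paired with `h_M` by
`∑ k, h k * x k`; finite sums suffice since all terms are taken in absolute value. -/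
def orliczDualBall (M : ℝ → ℝ) (C : ℝ) : Set (ℕ → ℝ) :=
  {h | ∀ (x : ℕ → ℝ) (F : Finset ℕ), ∑ k ∈ F, M |x k| ≤ 1 → ∑ k ∈ F, |h k| * |x k| ≤ C}

section OrliczDualBall

variable {M : ℝ → ℝ} {C : ℝ} {a h : ℕ → ℝ}

theorem orliczDualBall_mono {C' : ℝ} (hC : C ≤ C') : orliczDualBall M C ⊆ orliczDualBall M C' :=
  fun _ hh x F hx => (hh x F hx).trans hC

theorem indicator_mem_orliczDualBall (hh : h ∈ orliczDualBall M C) (s : Set ℕ) :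
    s.indicator h ∈ orliczDualBall M C := fun x F hx => by
  refine (Finset.sum_le_sum fun k _ => ?_).trans (hh x F hx)
  exact mul_le_mul_of_nonneg_right (norm_indicator_le_norm_self h k) (abs_nonneg _)

theorem sum_abs_mul_abs_le (hM : IsOrlicz M) (ha : MemOrliczHeart M a)
    (hh : h ∈ orliczDualBall M C) {r : ℝ} (hr : orliczNorm M a < r) (F : Finset ℕ) :
    ∑ k ∈ F, |h k * a k| ≤ C * r := by
  have hr0 : 0 < r := (orliczNorm_nonneg M a).trans_lt hr
  have hsum : ∑ k ∈ F, M |a k / r| ≤ 1 := by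
    simp only [abs_div, abs_of_pos hr0]
    exact ((ha.summable_div hr0.le).sum_le_tsum F fun k _ => hM.nonneg (by positivity)).trans
      (hM.tsum_div_le_one_of_orliczNorm_lt ha hr)
  calc ∑ k ∈ F, |h k * a k| = (∑ k ∈ F, |h k| * |a k / r|) * r := by
        rw [Finset.sum_mul]
        refine Finset.sum_congr rfl fun k _ => ?_
        rw [abs_mul, abs_div, abs_of_pos hr0, mul_assoc, div_mul_cancel₀ _ hr0.ne']
    _ ≤ C * r := by gcongr; exact hh _ F hsum

theorem summable_abs_mul_of_mem_orliczDualBall (hM : IsOrlicz M) (ha : MemOrliczHeart M a)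
    (hh : h ∈ orliczDualBall M C) : Summable fun k => |h k * a k| :=
  summable_of_sum_le (fun _ => abs_nonneg _)
    (sum_abs_mul_abs_le hM ha hh (lt_add_one (orliczNorm M a)))

theorem summable_mul_of_mem_orliczDualBall (hM : IsOrlicz M) (ha : MemOrliczHeart M a)
    (hh : h ∈ orliczDualBall M C) : Summable fun k => h k * a k :=
  (summable_abs_mul_of_mem_orliczDualBall hM ha hh).of_abs

theorem abs_tsum_mul_le_mul_orliczNorm (hM : IsOrlicz M) (ha : MemOrliczHeart M a)
    (hh : h ∈ orliczDualBall M C) : |∑' k, h k * a k| ≤ C * orliczNorm M a := by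
  have hlim : Tendsto (fun r => C * r) (𝓝[>] orliczNorm M a) (𝓝 (C * orliczNorm M a)) :=
    tendsto_nhdsWithin_of_tendsto_nhds ((continuous_const_mul C).tendsto _)
  refine ge_of_tendsto hlim ?_
  filter_upwards [self_mem_nhdsWithin] with r hr
  have habs := summable_abs_mul_of_mem_orliczDualBall hM ha hh
  calc |∑' k, h k * a k| ≤ ∑' k, |h k * a k| :=
        norm_tsum_le_tsum_norm (f := fun k => h k * a k) habs
    _ ≤ C * r := Real.tsum_le_of_sum_le (fun _ => abs_nonneg _) (sum_abs_mul_abs_le hM ha hh hr)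

theorem continuousOn_tsum_mul_orliczDualBall (hM : IsOrlicz M) (ha : MemOrliczHeart M a) (C : ℝ) :
    ContinuousOn (fun h : ℕ → ℝ => ∑' k, h k * a k) (orliczDualBall M C) := by
  refine continuousOn_of_uniform_approx_of_continuousOn fun u hu => ?_
  obtain ⟨ε, hε, hεu⟩ := Metric.mem_uniformity_dist.1 hu
  obtain ⟨F, hF⟩ := hM.exists_orliczNorm_indicator_compl_le a
    (show 0 < ε / (|C| + 1) by positivity)
  refine ⟨fun h => ∑ k ∈ F, h k * a k, by fun_prop, fun h hh => hεu ?_⟩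
  have hsum := summable_mul_of_mem_orliczDualBall hM ha hh
  have htail : ∑' k, h k * a k - ∑ k ∈ F, h k * a k =
      ∑' k, h k * (F : Set ℕ)ᶜ.indicator a k := by
    rw [← hsum.sum_add_tsum_compl (s := F), add_sub_cancel_left,
      tsum_subtype (F : Set ℕ)ᶜ fun k => h k * a k]
    simp only [Set.indicator_mul_right]
  rw [Real.dist_eq, htail]
  calc _ ≤ C * orliczNorm M ((F : Set ℕ)ᶜ.indicator a) :=
        abs_tsum_mul_le_mul_orliczNorm hM (ha.indicator hM _) hh
    _ ≤ |C| * (ε / (|C| + 1)) :=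
        mul_le_mul (le_abs_self C) hF (orliczNorm_nonneg M _) (abs_nonneg C)
    _ < ε := by
        rw [← mul_div_assoc, div_lt_iff₀ (by positivity)]
        linarith [abs_nonneg C]

theorem single_mem_orliczDualBall (hM : IsOrlicz M) (k : ℕ) {s : ℝ} (hs : |s| ≤ 1) :
    Pi.single k s ∈ orliczDualBall M 1 := fun x F hx => by
  by_cases hk : k ∈ F
  · have hxk : M |x k| ≤ 1 :=
      (Finset.single_le_sum (fun j _ => hM.nonneg (abs_nonneg (x j))) hk).trans hx
    have hxk1 : |x k| ≤ 1 := le_of_not_gt fun h => (h.trans_le (hM.self_le_map h.le)).not_ge hxk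
    rw [Finset.sum_eq_single_of_mem k hk fun j _ hj => by simp [hj], Pi.single_eq_same]
    exact mul_le_one₀ hs (abs_nonneg _) hxk1
  · rw [Finset.sum_eq_zero fun j hj => by simp [ne_of_mem_of_not_mem hj hk]]
    exact zero_le_one

theorem mem_orliczDualBall_of_abs_le_div (hM : IsOrlicz M) {b : ℕ → ℝ} {S : Finset ℕ}
    (hb : ∀ k ∈ S, 0 < b k) (hh : ∀ k ∈ S, |h k| ≤ M (b k) / b k) (hh0 : ∀ k ∉ S, h k = 0)
    (hC : ∑ k ∈ S, M (b k) ≤ C) : h ∈ orliczDualBall M (1 + C) := fun x F hx => by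
  have hsub : ∑ k ∈ F, |h k| * |x k| ≤ ∑ k ∈ F ∩ S, |h k| * |x k| :=
    (Finset.sum_subset Finset.inter_subset_left fun k hkF hk => by
      simp [hh0 k fun hkS => hk (Finset.mem_inter.2 ⟨hkF, hkS⟩)]).ge
  calc ∑ k ∈ F, |h k| * |x k| ≤ ∑ k ∈ F ∩ S, |h k| * |x k| := hsub
    _ ≤ ∑ k ∈ F ∩ S, (M |x k| + M (b k)) := by
        refine Finset.sum_le_sum fun k hk => ?_
        have hkS := (Finset.mem_inter.1 hk).2
        exact (mul_le_mul_of_nonneg_right (hh k hkS) (abs_nonneg _)).trans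
          (hM.div_mul_le_add (hb k hkS) (abs_nonneg _))
    _ = ∑ k ∈ F ∩ S, M |x k| + ∑ k ∈ F ∩ S, M (b k) := Finset.sum_add_distrib
    _ ≤ ∑ k ∈ F, M |x k| + ∑ k ∈ S, M (b k) := by
        refine add_le_add (Finset.sum_le_sum_of_subset_of_nonneg Finset.inter_subset_left ?_)
          (Finset.sum_le_sum_of_subset_of_nonneg Finset.inter_subset_right ?_)
        · exact fun k _ _ => hM.nonneg (abs_nonneg _)
        · exact fun k hk _ => hM.nonneg (hb k hk).le
    _ ≤ 1 + C := add_le_add hx hC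

end OrliczDualBall

section OrdinalConcat

variable {X : Type*} {x : X}

/-- The concatenation of `f 0, f 1, …`, with `f m` played on `(α m, α (m + 1)]`; the value is `x`
outside these intervals. -/
noncomputable def ordinalConcat (α : ℕ → Ordinal) (f : ℕ → Ordinal → X) (x : X) (β : Ordinal) : X :=
  open scoped Classical in
  if h : ∃ m, β ∈ Set.Ioc (α m) (α (m + 1)) then f h.choose (β - α h.choose) else x

theorem ordinalConcat_of_mem_Ioc {α : ℕ → Ordinal} (hα : StrictMono α) (f : ℕ → Ordinal → X)
    {β : Ordinal} {m : ℕ} (hβ : β ∈ Set.Ioc (α m) (α (m + 1))) :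
    ordinalConcat α f x β = f m (β - α m) := by
  have h : ∃ m, β ∈ Set.Ioc (α m) (α (m + 1)) := ⟨m, hβ⟩
  have hm : h.choose = m :=
    hα.monotone.pairwise_disjoint_on_Ioc_succ.eq (Set.not_disjoint_iff.2 ⟨β, h.choose_spec, hβ⟩)
  rw [ordinalConcat, dif_pos h, hm]

theorem ordinalConcat_eq_or (α : ℕ → Ordinal) (f : ℕ → Ordinal → X) (x : X) (β : Ordinal) :
    (∃ m, β ∈ Set.Ioc (α m) (α (m + 1)) ∧ ordinalConcat α f x β = f m (β - α m)) ∨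
      (∀ m, β ∉ Set.Ioc (α m) (α (m + 1))) ∧ ordinalConcat α f x β = x := by
  by_cases h : ∃ m, β ∈ Set.Ioc (α m) (α (m + 1))
  · exact .inl ⟨h.choose, h.choose_spec, by rw [ordinalConcat, dif_pos h]⟩
  · exact .inr ⟨not_exists.1 h, by rw [ordinalConcat, dif_neg h]⟩

theorem continuous_ordinal_sub_right (a : Ordinal) : Continuous fun β : Ordinal => β - a := by
  refine OrderTopology.continuous_iff.2 fun b => ⟨?_, ?_⟩
  · have : (fun β : Ordinal => β - a) ⁻¹' Set.Ioi b = Set.Ioi (a + b) :=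
      Set.ext fun _ => Ordinal.lt_sub
    exact this ▸ isOpen_Ioi
  · have : (fun β : Ordinal => β - a) ⁻¹' Set.Iio b = ⋃ c < b, Set.Iio (Order.succ (a + c)) := by
      ext β
      simp only [Set.mem_preimage, Set.mem_Iio, Set.mem_iUnion, Order.lt_succ_iff, exists_prop,
        ← Ordinal.sub_le]
      exact ⟨fun h => ⟨_, h, le_rfl⟩, fun ⟨c, hc, h⟩ => h.trans_lt hc⟩
    rw [this]
    exact isOpen_biUnion fun _ _ => isOpen_Iio

theorem continuous_ordinalConcat [TopologicalSpace X] {α : ℕ → Ordinal} (hα : StrictMono α)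
    {f : ℕ → Ordinal → X} (hf : ∀ m, Continuous (f m))
    (hx : Tendsto (fun m => Set.range (f m)) atTop (𝓝 x).smallSets) :
    Continuous (ordinalConcat α f x) := by
  refine continuous_iff_continuousAt.2 fun β => ?_
  rcases ordinalConcat_eq_or α f x β with ⟨m, hm, -⟩ | ⟨hβ, hβx⟩
  · have hnhds : Set.Ioc (α m) (α (m + 1)) ∈ 𝓝 β := by
      rw [← Set.Ioi_inter_Iic, ← Order.Iio_succ, Set.Ioi_inter_Iio]
      exact Ioo_mem_nhds hm.1 (Order.lt_succ_iff.2 hm.2)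
    refine ((hf m).comp (continuous_ordinal_sub_right (α m))).continuousAt.congr ?_
    filter_upwards [hnhds] with γ hγ using (ordinalConcat_of_mem_Ioc hα f hγ).symm
  rw [ContinuousAt, hβx]
  rcases le_or_gt β (α 0) with hβ0 | hβ0
  · refine tendsto_const_nhds.congr' ?_
    filter_upwards [isOpen_Iio.mem_nhds (Order.lt_succ_iff.2 hβ0)] with γ hγ
    rcases ordinalConcat_eq_or α f x γ with ⟨m, hm, -⟩ | ⟨-, hγx⟩
    · exact absurd (Order.lt_succ_iff.1 hγ)
        ((hα.monotone m.zero_le).trans_lt hm.1).not_ge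
    · exact hγx.symm
  · refine tendsto_def.2 fun U hU => ?_
    obtain ⟨N, hN⟩ := eventually_atTop.1 (tendsto_smallSets_iff.1 hx U hU)
    have hNβ : α N < β := by
      by_contra! hle
      have : β ∈ ⋃ m ∈ Set.Ico 0 N, Set.Ioc (α m) (α (m + 1)) :=
        hα.monotone.biUnion_Ico_Ioc_map_succ 0 N ▸ ⟨hβ0, hle⟩
      simp only [Set.mem_iUnion] at this
      obtain ⟨m, -, hm⟩ := this
      exact hβ m hm
    filter_upwards [isOpen_Ioi.mem_nhds hNβ] with γ hγ
    rcases ordinalConcat_eq_or α f x γ with ⟨m, hm, hγm⟩ | ⟨-, hγx⟩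
    · rw [Set.mem_preimage, hγm]
      exact hN m (Nat.lt_succ_iff.1 (hα.lt_iff_lt.1 (hγ.trans_le hm.2))) ⟨_, rfl⟩
    · rw [Set.mem_preimage, hγx]
      exact mem_of_mem_nhds hU

end OrdinalConcat

section OrdinalCovers

universe v

variable {X : Type*} [TopologicalSpace X] {x : X}

/-- A nonempty `S` is the image of `(0, α]` under a continuous map from the ordinals to `S`. -/
def OrdinalCovers (α : Ordinal.{v}) (S : Set X) : Prop :=
  S.Nonempty → ∃ φ : Ordinal.{v} → X, Continuous φ ∧ Set.range φ ⊆ S ∧ S ⊆ φ '' Set.Ioc 0 α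

theorem isLUB_range_natCast_comp {e : ℕ → ℕ} (he : StrictMono e) :
    IsLUB (Set.range fun m => (e m : Ordinal.{v})) ω := by
  refine ⟨Set.forall_mem_range.2 fun m => (Ordinal.natCast_lt_omega0 _).le, fun b hb => ?_⟩
  refine Ordinal.omega0_le.2 fun n => (Nat.cast_le.2 (he.id_le n)).trans (hb ⟨n, rfl⟩)

namespace OrdinalCovers

theorem empty (α : Ordinal) : OrdinalCovers α (∅ : Set X) := fun h =>
  absurd h Set.not_nonempty_empty

theorem singleton (x : X) {α : Ordinal} (hα : 0 < α) : OrdinalCovers α {x} := fun _ =>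
  ⟨fun _ => x, continuous_const, by simp, by simpa using ⟨α, hα, le_rfl⟩⟩

theorem exists_range_subset_insert {α : Ordinal} {S : Set X} (hS : OrdinalCovers α S) (x : X) :
    ∃ φ : Ordinal → X, Continuous φ ∧ Set.range φ ⊆ insert x S ∧ S ⊆ φ '' Set.Ioc 0 α := by
  rcases S.eq_empty_or_nonempty with rfl | hne
  · exact ⟨fun _ => x, continuous_const, by simp, Set.empty_subset _⟩
  · obtain ⟨φ, hφ, hrange, hcover⟩ := hS hne
    exact ⟨φ, hφ, hrange.trans (Set.subset_insert x S), hcover⟩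

theorem insert_iUnion {α l : ℕ → Ordinal} (hα : StrictMono α) {A : Ordinal}
    (hA : IsLUB (Set.range α) A) (hl : ∀ m, α m + l m ≤ α (m + 1)) {S : ℕ → Set X}
    (hS : ∀ m, OrdinalCovers (l m) (S m)) (hx : Tendsto S atTop (𝓝 x).smallSets) :
    OrdinalCovers A (insert x (⋃ m, S m)) := by
  choose f hf hrange hcover using fun m => (hS m).exists_range_subset_insert x
  have hfx : Tendsto (fun m => Set.range (f m)) atTop (𝓝 x).smallSets := by
    refine tendsto_smallSets_iff.2 fun U hU => ?_
    filter_upwards [tendsto_smallSets_iff.1 hx U hU] with m hm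
    exact (hrange m).trans (Set.insert_subset (mem_of_mem_nhds hU) hm)
  refine fun _ => ⟨ordinalConcat α f x, continuous_ordinalConcat hα hf hfx, ?_, ?_⟩
  · rintro _ ⟨β, rfl⟩
    rcases ordinalConcat_eq_or α f x β with ⟨m, -, hm⟩ | ⟨-, hβ⟩
    · rw [hm]
      exact Set.insert_subset_insert (Set.subset_iUnion S m) (hrange m ⟨_, rfl⟩)
    · exact .inl hβ
  · have hA0 : 0 < A := zero_le.trans_lt ((hα one_pos).trans_le (hA.1 ⟨1, rfl⟩))
    refine Set.insert_subset ⟨A, ⟨hA0, le_rfl⟩, ?_⟩ (Set.iUnion_subset fun m y hy => ?_)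
    · rcases ordinalConcat_eq_or α f x A with ⟨m, hm, -⟩ | ⟨-, hA⟩
      · exact absurd hm.2 ((hα (Nat.lt_succ_self (m + 1))).trans_le (hA.1 ⟨_, rfl⟩)).not_ge
      · exact hA
    · obtain ⟨γ, hγ, rfl⟩ := hcover m hy
      have hmem : α m + γ ∈ Set.Ioc (α m) (α (m + 1)) :=
        ⟨lt_add_of_pos_right _ hγ.1, (add_le_add_right hγ.2 _).trans (hl m)⟩
      refine ⟨α m + γ, ⟨zero_le.trans_lt hmem.1, hmem.2.trans (hA.1 ⟨_, rfl⟩)⟩, ?_⟩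
      rw [ordinalConcat_of_mem_Ioc hα f hmem, Ordinal.add_sub_cancel]

theorem insert_iUnion_mul_omega0 {ι : Type*} [Countable ι] {a : Ordinal.{v}} (ha : 0 < a)
    {S : ι → Set X} (hS : ∀ i, OrdinalCovers a (S i))
    (hx : Tendsto S cofinite (𝓝 x).smallSets) :
    OrdinalCovers (a * ω) (insert x (⋃ i, S i)) := by
  obtain ⟨f, hf⟩ := exists_injective_nat ι
  set S' : ℕ → Set X := Function.extend f S fun _ => ∅
  have hS'f : ∀ i, S' (f i) = S i := hf.extend_apply S _
  have hS'0 : ∀ m, (¬∃ i, f i = m) → S' m = ∅ := Function.extend_apply' S _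
  have hS' : ∀ m, OrdinalCovers a (S' m) := fun m => by
    by_cases hm : ∃ i, f i = m
    · obtain ⟨i, rfl⟩ := hm
      exact hS'f i ▸ hS i
    · exact hS'0 m hm ▸ empty a
  have hx' : Tendsto S' atTop (𝓝 x).smallSets := by
    rw [← Nat.cofinite_eq_atTop]
    refine tendsto_smallSets_iff.2 fun U hU => ?_
    refine ((tendsto_smallSets_iff.1 hx U hU).image f).subset fun m hm => ?_
    by_cases him : ∃ i, f i = m
    · obtain ⟨i, rfl⟩ := him
      exact ⟨i, fun hi => hm ((hS'f i).trans_subset hi), rfl⟩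
    · exact absurd ((hS'0 m him).trans_subset (Set.empty_subset U)) hm
  have hunion : ⋃ m, S' m = ⋃ i, S i := iSup_extend_bot hf S
  have hnormal := Ordinal.isNormal_mul_right ha
  rw [← hunion]
  refine insert_iUnion (α := fun m => a * m) (l := fun _ => a) ?_ ?_ (fun m => ?_) hS' hx'
  · exact hnormal.strictMono.comp Nat.strictMono_cast
  · have := hnormal.map_isLUB (isLUB_range_natCast_comp strictMono_id) (Set.range_nonempty _)
    rwa [← Set.range_comp] at this
  · push_cast; rw [mul_add_one]

theorem insert_iUnion_opow_omega0 {n : ℕ → ℕ} {S : ℕ → Set X}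
    (hS : ∀ m, OrdinalCovers (ω ^ (n m : Ordinal.{v})) (S m))
    (hx : Tendsto S atTop (𝓝 x).smallSets) :
    OrdinalCovers (ω ^ ω : Ordinal.{v}) (insert x (⋃ m, S m)) := by
  set e : ℕ → ℕ := fun m => ∑ j ∈ Finset.range m, (n j + 1)
  have he : ∀ m, e (m + 1) = e m + (n m + 1) := fun m => Finset.sum_range_succ _ m
  have hmono : StrictMono e := strictMono_nat_of_lt_succ fun m => by rw [he]; omega
  have hnormal := Ordinal.isNormal_opow one_lt_omega0
  refine insert_iUnion (α := fun m => ω ^ (e m : Ordinal.{v})) ?_ ?_ (fun m => ?_) hS hx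
  · exact hnormal.strictMono.comp (Nat.strictMono_cast.comp hmono)
  · have := hnormal.map_isLUB (isLUB_range_natCast_comp hmono) (Set.range_nonempty _)
    rwa [← Set.range_comp] at this
  · exact (Ordinal.isPrincipal_add_omega0_opow _
      (hnormal.strictMono (Nat.cast_lt.2 (by rw [he]; omega)))
      (hnormal.strictMono (Nat.cast_lt.2 (by rw [he]; omega)))).le

end OrdinalCovers

end OrdinalCovers

section SparseExtensions

universe v

variable {E : Type*} {Q : Set (ℕ → E)} {D : Set E} {n K : ℕ} {g : ℕ → E}

theorem tendsto_smallSets_nhds_pi {ι κ : Type*} [TopologicalSpace E] {l : Filter ι}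
    {S : ι → Set (κ → E)} {x : κ → E}
    (h : ∀ k, Tendsto (fun i => Function.eval k '' S i) l (𝓝 (x k)).smallSets) :
    Tendsto S l (𝓝 x).smallSets := by
  refine tendsto_smallSets_iff.2 fun U hU => ?_
  rw [nhds_pi, Filter.mem_pi] at hU
  obtain ⟨I, hI, t, ht, htU⟩ := hU
  filter_upwards [(eventually_all_finite hI).2 fun k _ => tendsto_smallSets_iff.1 (h k) _ (ht k)]
    with i hi y hy
  exact htU fun k hk => hi k hk ⟨y, hy, rfl⟩

theorem tendsto_cylinder_smallSets [TopologicalSpace E] (g : ℕ → E) :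
    Tendsto (PiNat.cylinder g) atTop (𝓝 g).smallSets :=
  tendsto_smallSets_nhds_pi fun k => tendsto_smallSets_iff.2 fun U hU => by
    filter_upwards [eventually_gt_atTop k] with K hK
    rintro _ ⟨h, hh, rfl⟩
    rw [Function.eval, hh k hK]
    exact mem_of_mem_nhds hU

variable [Zero E]

/-- The sequences in `Q` that agree with `g` before `K` and have from `K` on at most `n` nonzero
terms, all of them in `D`. -/
def sparseExtensions (Q : Set (ℕ → E)) (D : Set E) (n K : ℕ) (g : ℕ → E) : Set (ℕ → E) :=
  {h ∈ Q | h ∈ PiNat.cylinder g K ∧ (∀ k, K ≤ k → h k ≠ 0 → h k ∈ D) ∧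
    {k | K ≤ k ∧ h k ≠ 0}.encard ≤ n}

theorem mem_sparseExtensions_zero {h : ℕ → E} :
    h ∈ sparseExtensions Q D n 0 g ↔
      h ∈ Q ∧ (∀ k, h k ≠ 0 → h k ∈ D) ∧ h.support.encard ≤ n := by
  simp only [sparseExtensions, Set.mem_ofPred_eq, PiNat.cylinder_zero, Set.mem_univ, zero_le,
    true_and, forall_const, Function.support]

theorem eq_of_mem_cylinder_of_forall_ge_eq_zero (hg : ∀ k, K ≤ k → g k = 0) {h : ℕ → E}
    (hh : h ∈ PiNat.cylinder g K) (h0 : ∀ k, K ≤ k → h k = 0) : h = g := by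
  funext k
  rcases lt_or_ge k K with hk | hk
  · exact hh k hk
  · rw [hg k hk, h0 k hk]

theorem sparseExtensions_subset_singleton (hg : ∀ k, K ≤ k → g k = 0) :
    sparseExtensions Q D 0 K g ⊆ {g} := fun h hh =>
  eq_of_mem_cylinder_of_forall_ge_eq_zero hg hh.2.1 fun k hk => by
    by_contra hne
    have hempty : {k | K ≤ k ∧ h k ≠ 0} = ∅ := by simpa using hh.2.2.2
    exact Set.eq_empty_iff_forall_notMem.1 hempty k ⟨hk, hne⟩

theorem sparseExtensions_eq_empty (hQ : ∀ h ∈ Q, ∀ k, (Set.Iio k).indicator h ∈ Q)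
    (hg : ∀ k, K ≤ k → g k = 0) (hgQ : g ∉ Q) : sparseExtensions Q D n K g = ∅ := by
  refine Set.eq_empty_iff_forall_notMem.2 fun h hh => hgQ ?_
  convert! hQ h hh.1 K using 1
  funext k
  rcases lt_or_ge k K with hk | hk
  · simp [hk, hh.2.1 k hk]
  · simp [hk, hg k hk]

theorem sparseExtensions_update_subset (hg : ∀ k, K ≤ k → g k = 0) (j : ℕ) {d : E} (hd : d ∈ D) :
    sparseExtensions Q D n (K + j + 1) (Function.update g (K + j) d) ⊆
      sparseExtensions Q D (n + 1) K g := by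
  rintro h ⟨hhQ, hcyl, hD, hcard⟩
  have hbefore : ∀ k < K + j, h k = g k := fun k hk => by
    rw [hcyl k (by omega), Function.update_of_ne (by omega)]
  have hzero : ∀ k, K ≤ k → k < K + j → h k = 0 := fun k hk hkj => by rw [hbefore k hkj, hg k hk]
  refine ⟨hhQ, fun k hk => hbefore k (by omega), fun k hk hne => ?_, ?_⟩
  · rcases lt_trichotomy k (K + j) with hkj | rfl | hkj
    · exact absurd (hzero k hk hkj) hne
    · rwa [hcyl (K + j) (by omega), Function.update_self]
    · exact hD k hkj hne
  · have hsub : {k | K ≤ k ∧ h k ≠ 0} ⊆ insert (K + j) {k | K + j + 1 ≤ k ∧ h k ≠ 0} := by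
      rintro k ⟨hk, hne⟩
      rcases lt_trichotomy k (K + j) with hkj | rfl | hkj
      · exact absurd (hzero k hk hkj) hne
      · exact .inl rfl
      · exact .inr ⟨hkj, hne⟩
    calc _ ≤ _ := Set.encard_le_encard hsub
      _ ≤ {k | K + j + 1 ≤ k ∧ h k ≠ 0}.encard + 1 := Set.encard_insert_le _ _
      _ ≤ (n + 1 : ℕ) := by push_cast; gcongr

theorem exists_mem_sparseExtensions_update (hg : ∀ k, K ≤ k → g k = 0) {h : ℕ → E}
    (hh : h ∈ sparseExtensions Q D (n + 1) K g) (hne : h ≠ g) :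
    ∃ j, ∃ d ∈ D, h ∈ sparseExtensions Q D n (K + j + 1) (Function.update g (K + j) d) := by
  classical
  obtain ⟨hhQ, hcyl, hD, hcard⟩ := hh
  have hex : ∃ j, h (K + j) ≠ 0 := by
    by_contra! h0
    refine hne (eq_of_mem_cylinder_of_forall_ge_eq_zero hg hcyl fun k hk => ?_)
    rw [← Nat.add_sub_cancel' hk, h0]
  set j := Nat.find hex
  have hj : h (K + j) ≠ 0 := Nat.find_spec hex
  have hzero : ∀ k, K ≤ k → k < K + j → h k = 0 := fun k hk hkj => by
    rw [← Nat.add_sub_cancel' hk]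
    exact not_not.1 (Nat.find_min hex (by omega))
  refine ⟨j, h (K + j), hD _ (by omega) hj, hhQ, fun k hk => ?_, fun k hk => hD k (by omega), ?_⟩
  · rcases (Nat.lt_succ_iff_lt_or_eq.1 hk) with hkj | rfl
    · rw [Function.update_of_ne (by omega)]
      rcases lt_or_ge k K with hkK | hKk
      · exact hcyl k hkK
      · rw [hzero k hKk hkj, hg k hKk]
    · rw [Function.update_self]
  · have hsub : insert (K + j) {k | K + j + 1 ≤ k ∧ h k ≠ 0} ⊆ {k | K ≤ k ∧ h k ≠ 0} :=
      Set.insert_subset ⟨by omega, hj⟩ fun k hk => ⟨by have := hk.1; omega, hk.2⟩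
    have hle := (Set.encard_le_encard hsub).trans hcard
    rw [Set.encard_insert_of_notMem fun hk => by simp at hk] at hle
    push_cast at hle
    exact (ENat.add_le_add_iff_right ENat.one_ne_top).1 hle

theorem sparseExtensions_succ (hg : ∀ k, K ≤ k → g k = 0) (hgQ : g ∈ Q) :
    sparseExtensions Q D (n + 1) K g = insert g (⋃ p : ℕ × D,
      sparseExtensions Q D n (K + p.1 + 1) (Function.update g (K + p.1) p.2)) := by
  refine Set.Subset.antisymm (fun h hh => ?_) (Set.insert_subset ?_ (Set.iUnion_subset fun p =>
    sparseExtensions_update_subset hg p.1 p.2.2))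
  · rcases eq_or_ne h g with rfl | hne
    · exact Set.mem_insert h _
    · obtain ⟨j, d, hd, hmem⟩ := exists_mem_sparseExtensions_update hg hh hne
      exact .inr (Set.mem_iUnion.2 ⟨(j, ⟨d, hd⟩), hmem⟩)
  · have hempty : {k | K ≤ k ∧ g k ≠ 0} = ∅ :=
      Set.eq_empty_iff_forall_notMem.2 fun k hk => hk.2 (hg k hk.1)
    exact ⟨hgQ, PiNat.self_mem_cylinder g K, fun k hk hne => absurd (hg k hk) hne, by simp [hempty]⟩

namespace OrdinalCovers

theorem sparseExtensions [TopologicalSpace E] (hQ : ∀ h ∈ Q, ∀ k, (Set.Iio k).indicator h ∈ Q)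
    (hD : D.Finite) (n : ℕ) {K : ℕ} {g : ℕ → E} (hg : ∀ k, K ≤ k → g k = 0) :
    OrdinalCovers (ω ^ (n : Ordinal.{v})) (sparseExtensions Q D n K g) := by
  induction n generalizing K g with
  | zero =>
    rcases Set.subset_singleton_iff_eq.1 (sparseExtensions_subset_singleton hg) with h | h
    · exact h ▸ empty _
    · exact h ▸ singleton _ (by simp)
  | succ n ih =>
    by_cases hgQ : g ∈ Q
    swap
    · exact sparseExtensions_eq_empty hQ hg hgQ ▸ empty _
    have := hD.to_subtype
    rw [sparseExtensions_succ hg hgQ, Nat.cast_succ, Ordinal.opow_add_one]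
    refine insert_iUnion_mul_omega0 (Ordinal.opow_pos _ Ordinal.omega0_pos)
      (fun p => ih fun k hk => ?_) ?_
    · rw [Function.update_of_ne (by omega), hg k (by omega)]
    · have hfst : Tendsto (fun p : ℕ × D => K + p.1) cofinite atTop := by
        refine (tendsto_add_atTop_nat K).comp ?_ |>.congr fun p => add_comm _ _
        rw [← Nat.cofinite_eq_atTop]
        exact Tendsto.cofinite_of_finite_preimage_singleton fun m =>
          ((Set.finite_singleton m).prod Set.finite_univ).subset fun p hp => ⟨hp, trivial⟩
      refine tendsto_smallSets_iff.2 fun U hU => ?_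
      filter_upwards [hfst.eventually (tendsto_smallSets_iff.1 (tendsto_cylinder_smallSets g) U hU)]
        with p hp h hh
      refine hp fun k hk => ?_
      rw [hh.2.1 k (by omega), Function.update_of_ne (by omega)]

end OrdinalCovers

end SparseExtensions

section Embedding

variable {M : ℝ → ℝ} {C : ℝ}

theorem exists_boundedContinuousFunction_eq_tsum_mul {Y : Type*} [TopologicalSpace Y]
    (hM : IsOrlicz M) {φ : Y → ℕ → ℝ} (hφ : Continuous φ) (hφC : ∀ y, φ y ∈ orliczDualBall M C) :
    ∃ T : (ℕ → ℝ) → BoundedContinuousFunction Y ℝ,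
      ∀ a, MemOrliczHeart M a → ∀ y, T a y = ∑' k, φ y k * a k := by
  have hcont : ∀ a, MemOrliczHeart M a → Continuous fun y => ∑' k, φ y k * a k := fun a ha =>
    (continuousOn_tsum_mul_orliczDualBall hM ha C).comp_continuous hφ hφC
  choose! T hT using fun (a : ℕ → ℝ) (ha : MemOrliczHeart M a) =>
    (⟨BoundedContinuousFunction.ofNormedAddCommGroup _ (hcont a ha) (C * orliczNorm M a)
      fun y => abs_tsum_mul_le_mul_orliczNorm hM ha (hφC y), fun _ => rfl⟩ :
      ∃ f : BoundedContinuousFunction Y ℝ, ∀ y, f y = ∑' k, φ y k * a k)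
  exact ⟨T, hT⟩

theorem embedsHM_of_ordinalCovers (hM : IsOrlicz M) (hC : 0 < C) {c : ℝ} (hc : 0 < c)
    {α : Ordinal} {K : Set (ℕ → ℝ)} (hK : K.Nonempty) (hKC : K ⊆ orliczDualBall M C)
    (hKα : OrdinalCovers α K)
    (hnorming : ∀ a, MemOrliczHeart M a → ∀ r, 0 < r → 1 < ∑' k, M (|a k| / r) →
      ∃ h ∈ K, c * r ≤ |∑' k, h k * a k|) :
    EmbedsHM M α := by
  obtain ⟨φ, hφ, hrange, hcover⟩ := hKα hK
  have hφC : ∀ β, φ β ∈ orliczDualBall M C := fun β => hKC (hrange ⟨β, rfl⟩)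
  obtain ⟨T, hT⟩ := exists_boundedContinuousFunction_eq_tsum_mul (φ := fun β : Set.Iic α => φ β) hM
    (hφ.comp continuous_subtype_val) fun β => hφC β
  refine ⟨T, fun a b ha hb => ?_, fun t a ha => ?_, c, hc, C, hC, fun a ha => ⟨?_, ?_⟩⟩
  · have ha' := ha.memOrliczHeart
    have hb' := hb.memOrliczHeart
    ext β
    rw [hT _ (ha'.add hM hb'), BoundedContinuousFunction.add_apply, hT _ ha', hT _ hb',
      ← (summable_mul_of_mem_orliczDualBall hM ha' (hφC β)).tsum_add
        (summable_mul_of_mem_orliczDualBall hM hb' (hφC β))]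
    exact tsum_congr fun k => _root_.mul_add _ _ _
  · ext β
    rw [hT _ (ha.memOrliczHeart.smul t), BoundedContinuousFunction.smul_apply,
      hT _ ha.memOrliczHeart, _root_.smul_eq_mul, ← tsum_mul_left]
    exact tsum_congr fun k => mul_left_comm _ _ _
  · rw [← le_div_iff₀' hc]
    refine le_of_forall_lt_imp_le_of_dense fun r hr => ?_
    rcases le_or_gt r 0 with hr0 | hr0
    · exact hr0.trans (by positivity)
    obtain ⟨h, hhK, hh⟩ := hnorming a ha.memOrliczHeart r hr0
      (lt_of_not_ge fun hle => hr.not_ge (orliczNorm_le hr0 hle))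
    obtain ⟨β, hβ, rfl⟩ := hcover hhK
    rw [le_div_iff₀' hc]
    exact hh.trans (hT a ha.memOrliczHeart ⟨β, hβ.2⟩ ▸ (T a).norm_coe_le_norm ⟨β, hβ.2⟩)
  · refine (BoundedContinuousFunction.norm_le
      (mul_nonneg hC.le (orliczNorm_nonneg M a))).2 fun β => ?_
    rw [hT a ha.memOrliczHeart]
    exact abs_tsum_mul_le_mul_orliczNorm hM ha.memOrliczHeart (hφC β)

end Embedding

section NormingSequences

variable {M : ℝ → ℝ} {η : ℝ} {τ : ℕ → ℝ}

/-- Thresholds below which the decay in condition (1) of the theorem, and that of `M t / t`, become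
geometric. The interval `(τ (i + 1), τ i]` is called level `i`. -/
structure IsOrliczScale (M : ℝ → ℝ) (η : ℝ) (τ : ℕ → ℝ) : Prop where
  pos : ∀ i, 0 < τ i
  le_pow : ∀ i, τ i ≤ (1 / 2) ^ i
  map_mul_le : ∀ i, ∀ t ∈ Set.Ioc 0 (τ i), M (η * t) ≤ (1 / 2) ^ (i + 1) * M t
  map_le : ∀ i, ∀ t ∈ Set.Ioc 0 (τ i), M t ≤ (1 / 2) ^ i * t

theorem IsOrlicz.exists_isOrliczScale (hM : IsOrlicz M) (hη : 0 < η)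
    (h : Tendsto (fun t => M (η * t) / M t) (𝓝[>] 0) (𝓝 0)) : ∃ τ, IsOrliczScale M η τ := by
  have hτ : ∀ i : ℕ, ∃ u ∈ Set.Ioi (0 : ℝ), Set.Ioc 0 u ⊆ {t |
      t ≤ (1 / 2) ^ i ∧ M (η * t) ≤ (1 / 2) ^ (i + 1) * M t ∧ M t ≤ (1 / 2) ^ i * t} := fun i => by
    refine mem_nhdsGT_iff_exists_Ioc_subset.1 ?_
    filter_upwards [Ioc_mem_nhdsGT (show (0 : ℝ) < (1 / 2) ^ i by positivity),
      h.eventually_le_const (show (0 : ℝ) < (1 / 2) ^ (i + 1) by positivity),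
      (hM.tendsto_div_self hη h).eventually_le_const (show (0 : ℝ) < (1 / 2) ^ i by positivity)]
      with t ht hratio hslope
    exact ⟨ht.2, (div_le_iff₀ (hM.pos t ht.1)).1 hratio, (div_le_iff₀ ht.1).1 hslope⟩
  choose τ hpos hτ using hτ
  exact ⟨τ, hpos, fun i => (hτ i ⟨hpos i, le_rfl⟩).1, fun i t ht => (hτ i ht).2.1,
    fun i t ht => (hτ i ht).2.2⟩

theorem exists_subset_sum_mem_Ioc {ι : Type*} {F : Finset ι} {w : ι → ℝ}
    (hw : ∀ k ∈ F, w k ≤ 1) (h : 1 < ∑ k ∈ F, w k) : ∃ S ⊆ F, ∑ k ∈ S, w k ∈ Set.Ioc 1 2 := by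
  classical
  induction F using Finset.induction_on with
  | empty => exact absurd h (by simp)
  | insert k F hk ih =>
    rcases lt_or_ge 1 (∑ k ∈ F, w k) with hF | hF
    · obtain ⟨S, hS, hsum⟩ := ih (fun j hj => hw j (Finset.mem_insert_of_mem hj)) hF
      exact ⟨S, hS.trans (Finset.subset_insert k F), hsum⟩
    · refine ⟨insert k F, subset_rfl, h, ?_⟩
      rw [Finset.sum_insert hk]
      linarith [hw k (Finset.mem_insert_self k F)]

theorem sum_geometric_two_succ_le_one (s : Finset ℕ) : ∑ i ∈ s, (1 / 2 : ℝ) ^ (i + 1) ≤ 1 := by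
  calc ∑ i ∈ s, (1 / 2 : ℝ) ^ (i + 1) = (∑ i ∈ s, (1 / 2 : ℝ) ^ i) * (1 / 2) := by
        simp only [pow_succ, Finset.sum_mul]
    _ ≤ 2 * (1 / 2) := by
        gcongr
        exact (summable_geometric_two.sum_le_tsum s fun i _ => by positivity).trans_eq
          tsum_geometric_two
    _ = 1 := by norm_num

namespace IsOrliczScale

theorem le_one (hτ : IsOrliczScale M η τ) (i : ℕ) : τ i ≤ 1 :=
  (hτ.le_pow i).trans (pow_le_one₀ (by norm_num) (by norm_num))

theorem exists_level (hτ : IsOrliczScale M η τ) {t : ℝ} (ht : t ∈ Set.Ioc 0 (τ 0)) :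
    ∃ i, t ∈ Set.Ioc (τ (i + 1)) (τ i) := by
  classical
  have hex : ∃ i, τ (i + 1) < t := by
    obtain ⟨i, hi⟩ := exists_pow_lt_of_lt_one ht.1 (show (1 / 2 : ℝ) < 1 by norm_num)
    exact ⟨i, ((hτ.le_pow (i + 1)).trans
      (pow_le_pow_of_le_one (by norm_num) (by norm_num) (by omega))).trans_lt hi⟩
  refine ⟨Nat.find hex, Nat.find_spec hex, ?_⟩
  rcases hi : Nat.find hex with _ | i
  · exact ht.2
  · exact not_lt.1 (Nat.find_min hex (m := i) (by omega))

theorem exists_level_one_lt_sum (hM : IsOrlicz M) (hη : 0 ≤ η) (hτ : IsOrliczScale M η τ)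
    {b : ℕ → ℝ} (hb : ∀ k, b k ∈ Set.Icc 0 (τ 0)) (h : 1 < ∑' k, M (η * b k)) :
    ∃ i, ∃ G : Finset ℕ, (∀ k ∈ G, b k ∈ Set.Ioc (τ (i + 1)) (τ i)) ∧ 1 < ∑ k ∈ G, M (b k) := by
  classical
  obtain ⟨F, hF⟩ : ∃ F : Finset ℕ, 1 < ∑ k ∈ F, M (η * b k) := by
    contrapose! h
    exact Real.tsum_le_of_sum_le (fun k => hM.nonneg (mul_nonneg hη (hb k).1)) h
  have hlevel : ∀ k, ∃ i, 0 < b k → b k ∈ Set.Ioc (τ (i + 1)) (τ i) := fun k => by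
    by_cases hk : 0 < b k
    · exact (hτ.exists_level ⟨hk, (hb k).2⟩).imp fun i hi _ => hi
    · exact ⟨0, fun h => absurd h hk⟩
  choose level hlevel using hlevel
  set G : ℕ → Finset ℕ := fun i => {k ∈ F | 0 < b k ∧ level k = i}
  have hG : ∀ i, ∀ k ∈ G i, b k ∈ Set.Ioc (τ (i + 1)) (τ i) := fun i k hk => by
    obtain ⟨-, hk0, rfl⟩ := Finset.mem_filter.1 hk
    exact hlevel k hk0
  suffices hex : ∃ i, 1 < ∑ k ∈ G i, M (b k) from hex.imp fun i hi => ⟨G i, hG i, hi⟩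
  contrapose! hF
  calc ∑ k ∈ F, M (η * b k) = ∑ k ∈ F with 0 < b k, M (η * b k) := by
        refine (Finset.sum_filter_of_ne fun k _ hk => (hb k).1.lt_of_ne' fun h0 => hk ?_).symm
        simp [h0, hM.zero]
    _ = ∑ i ∈ F.image level, ∑ k ∈ G i, M (η * b k) := by
        rw [← Finset.sum_fiberwise_of_maps_to (t := F.image level) fun k hk =>
          Finset.mem_image_of_mem level (Finset.mem_of_mem_filter k hk)]
        simp only [Finset.filter_filter, G]
    _ ≤ ∑ i ∈ F.image level, (1 / 2) ^ (i + 1) * ∑ k ∈ G i, M (b k) := by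
        refine Finset.sum_le_sum fun i _ => ?_
        rw [Finset.mul_sum]
        exact Finset.sum_le_sum fun k hk => hτ.map_mul_le i (b k)
          ⟨(hτ.pos _).trans (hG i k hk).1, (hG i k hk).2⟩
    _ ≤ ∑ i ∈ F.image level, (1 / 2) ^ (i + 1) := by
        gcongr with i
        exact mul_le_of_le_one_right (by positivity) (hF i)
    _ ≤ 1 := sum_geometric_two_succ_le_one _

theorem exists_level_sum_mem_Ioc (hM : IsOrlicz M) (hη : 0 ≤ η) (hτ : IsOrliczScale M η τ)
    {b : ℕ → ℝ} (hb : ∀ k, b k ∈ Set.Icc 0 (τ 0)) (h : 1 < ∑' k, M (η * b k)) :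
    ∃ i, ∃ S : Finset ℕ, (∀ k ∈ S, b k ∈ Set.Ioc (τ (i + 1)) (τ i)) ∧
      ∑ k ∈ S, M (b k) ∈ Set.Ioc 1 2 := by
  obtain ⟨i, G, hG, hi⟩ := exists_level_one_lt_sum hM hη hτ hb h
  have hMb : ∀ k ∈ G, M (b k) ≤ 1 := fun k hk => by
    have hk1 : b k ≤ 1 := (hG k hk).2.trans (hτ.le_one i)
    exact (hM.map_le_self (hb k).1 hk1).trans hk1
  obtain ⟨S, hSG, hS⟩ := exists_subset_sum_mem_Ioc hMb hi
  exact ⟨i, S, fun k hk => hG k (hSG hk), hS⟩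

theorem exists_pow_le_div (hM : IsOrlicz M) (hτ : IsOrliczScale M η τ) {i l : ℕ}
    (hl : (1 / 2) ^ l < M (τ (i + 1)) / 2) {t : ℝ} (ht : t ∈ Set.Ioc (τ (i + 1)) (τ i)) :
    ∃ e, i ≤ e ∧ e ≤ l ∧ (1 / 2) ^ e ≤ M t / t ∧ M t / 2 ≤ (1 / 2) ^ e * t := by
  have ht0 : 0 < t := (hτ.pos _).trans ht.1
  have hslope : M t / t ≤ (1 / 2) ^ i := (div_le_iff₀ ht0).2 (hτ.map_le i t ⟨ht0, ht.2⟩)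
  obtain ⟨m, hm, hm'⟩ := exists_nat_pow_near_of_lt_one (div_pos (hM.pos t ht0) ht0)
    (hslope.trans (pow_le_one₀ (by norm_num) (by norm_num))) one_half_pos one_half_lt_one
  have hle : M (τ (i + 1)) ≤ M t / t := by
    rw [le_div_iff₀ ht0]
    calc M (τ (i + 1)) * t ≤ M (τ (i + 1)) :=
          mul_le_of_le_one_right (hM.pos _ (hτ.pos _)).le (ht.2.trans (hτ.le_one i))
      _ ≤ M t := hM.mono (hτ.pos _).le ht0.le ht.1.le
  have hround : M t / t ≤ 2 * (1 / 2) ^ (m + 1) := hm'.trans_eq (by rw [pow_succ]; ring)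
  refine ⟨m + 1, ?_, ?_, hm.le, ?_⟩
  · exact ((pow_lt_pow_iff_right_of_lt_one₀ one_half_pos one_half_lt_one).1
      (hm.trans_le hslope)).le
  · have hlt : (1 / 2 : ℝ) ^ l < (1 / 2) ^ (m + 1) := by linarith
    exact ((pow_lt_pow_iff_right_of_lt_one₀ one_half_pos one_half_lt_one).1 hlt).le
  · rw [div_le_iff₀ ht0] at hround
    linarith

end IsOrliczScale

theorem abs_sign_mul_of_ne_zero {x : ℝ} (hx : x ≠ 0) (y : ℝ) :
    |(SignType.sign x : ℝ) * y| = |y| := by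
  rcases hx.lt_or_gt with h | h <;> simp [h]

/-- The real numbers `± 2⁻ᵉ` with `i ≤ e ≤ l`. -/
def dyadicValues (i l : ℕ) : Set ℝ :=
  {y | ∃ e, i ≤ e ∧ e ≤ l ∧ |y| = (1 / 2) ^ e}

theorem finite_dyadicValues (i l : ℕ) : (dyadicValues i l).Finite := by
  refine ((Set.finite_Iic l).biUnion fun e _ =>
    (Set.toFinite {(1 / 2 : ℝ) ^ e, -(1 / 2) ^ e})).subset ?_
  rintro y ⟨e, -, he, hy⟩
  exact Set.mem_biUnion he ((abs_eq (by positivity)).1 hy)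

theorem abs_le_of_mem_dyadicValues {i l : ℕ} {y : ℝ} (hy : y ∈ dyadicValues i l) :
    |y| ≤ (1 / 2) ^ i := by
  obtain ⟨e, hie, -, hy⟩ := hy
  exact hy ▸ pow_le_pow_of_le_one (by norm_num) (by norm_num) hie

/-- The functionals that norm the vectors concentrated on level `i` of the scale `τ`: their
coordinates are the slopes `M t / t` of level `i` rounded down to powers of two, and
`2 / M (τ (i + 1))` bounds how many coordinates of that level can be needed. -/
def normingSequences (M : ℝ → ℝ) (τ : ℕ → ℝ) (l : ℕ → ℕ) (i : ℕ) : Set (ℕ → ℝ) :=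
  sparseExtensions (orliczDualBall M 3) (dyadicValues i (l i)) ⌈2 / M (τ (i + 1))⌉₊ 0 0

variable {l : ℕ → ℕ}

theorem tendsto_normingSequences_smallSets (M : ℝ → ℝ) (τ : ℕ → ℝ) (l : ℕ → ℕ) :
    Tendsto (normingSequences M τ l) atTop (𝓝 0).smallSets := by
  refine tendsto_smallSets_nhds_pi fun k => ?_
  have hball := (tendsto_closedBall_smallSets (0 : ℝ)).comp
    (tendsto_pow_atTop_nhds_zero_of_lt_one one_half_pos.le one_half_lt_one)
  refine hball.smallSets_mono (.of_forall fun i => ?_)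
  rintro _ ⟨h, hh, rfl⟩
  rw [Function.comp_apply, mem_closedBall_zero_iff, Real.norm_eq_abs, Function.eval]
  by_cases hk : h k = 0
  · simp [hk]
  · exact abs_le_of_mem_dyadicValues ((mem_sparseExtensions_zero.1 hh).2.1 k hk)

namespace IsOrliczScale

theorem exists_mem_normingSequences_of_lt (hM : IsOrlicz M) (hτ : IsOrliczScale M η τ) {x : ℕ → ℝ}
    {k : ℕ} (hk : τ 0 < |x k|) :
    ∃ h ∈ normingSequences M τ l 0, τ 0 ≤ |∑' k, h k * x k| := by
  have hx : x k ≠ 0 := abs_pos.1 ((hτ.pos 0).trans hk)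
  have hsign : |(SignType.sign (x k) : ℝ)| = 1 := by
    simpa using abs_sign_mul_of_ne_zero hx 1
  refine ⟨Pi.single k (SignType.sign (x k) : ℝ), mem_sparseExtensions_zero.2 ⟨?_, ?_, ?_⟩, ?_⟩
  · exact orliczDualBall_mono (by norm_num) (single_mem_orliczDualBall hM k hsign.le)
  · intro j hj
    obtain rfl : j = k := by
      by_contra hjk
      exact hj (Pi.single_eq_of_ne hjk _)
    rw [Pi.single_eq_same]
    exact ⟨0, le_rfl, zero_le, by rw [hsign, pow_zero]⟩
  · refine (Set.encard_le_encard Pi.support_single_subset).trans ?_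
    rw [Set.encard_singleton, Nat.one_le_cast, Nat.one_le_ceil_iff]
    exact div_pos two_pos (hM.pos _ (hτ.pos _))
  · rw [tsum_eq_single k fun j hj => by simp [hj], Pi.single_eq_same,
      abs_sign_mul_of_ne_zero hx]
    exact hk.le

theorem card_le_ceil (hM : IsOrlicz M) (hτ : IsOrliczScale M η τ) {b : ℕ → ℝ} {i : ℕ}
    {S : Finset ℕ} (hb : ∀ k ∈ S, τ (i + 1) ≤ b k) (hS : ∑ k ∈ S, M (b k) ≤ 2) :
    S.card ≤ ⌈2 / M (τ (i + 1))⌉₊ := by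
  have hcard : (S.card : ℝ) * M (τ (i + 1)) ≤ 2 := by
    rw [← _root_.nsmul_eq_mul]
    exact (Finset.card_nsmul_le_sum S _ _ fun k hk =>
      hM.mono (hτ.pos _).le ((hτ.pos _).le.trans (hb k hk)) (hb k hk)).trans hS
  exact_mod_cast ((le_div_iff₀ (hM.pos _ (hτ.pos _))).2 hcard).trans (Nat.le_ceil _)

theorem exists_mem_normingSequences_of_level (hM : IsOrlicz M) (hτ : IsOrliczScale M η τ)
    {x : ℕ → ℝ} {i : ℕ} (hl : (1 / 2) ^ l i < M (τ (i + 1)) / 2) {S : Finset ℕ}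
    (hx : ∀ k ∈ S, |x k| ∈ Set.Ioc (τ (i + 1)) (τ i)) (hS : ∑ k ∈ S, M |x k| ∈ Set.Ioc 1 2) :
    ∃ h ∈ normingSequences M τ l i, 1 / 2 ≤ |∑' k, h k * x k| := by
  have hx0 : ∀ k ∈ S, 0 < |x k| := fun k hk => (hτ.pos _).trans (hx k hk).1
  choose! e hie hel hle hge using fun k hk => exists_pow_le_div hM hτ hl (hx k hk)
  set h : ℕ → ℝ := (S : Set ℕ).indicator fun k => (SignType.sign (x k) : ℝ) * (1 / 2) ^ e k
  have hmem : ∀ k ∈ S, h k = (SignType.sign (x k) : ℝ) * (1 / 2) ^ e k := fun k hk =>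
    Set.indicator_of_mem (Finset.mem_coe.2 hk) _
  have hnotMem : ∀ k ∉ S, h k = 0 := fun k hk => Set.indicator_of_notMem (by simpa using hk) _
  have habs : ∀ k ∈ S, |h k| = (1 / 2) ^ e k := fun k hk => by
    rw [hmem k hk, abs_sign_mul_of_ne_zero (abs_pos.1 (hx0 k hk)), abs_of_pos (by positivity)]
  refine ⟨h, mem_sparseExtensions_zero.2 ⟨?_, fun k hk => ?_, ?_⟩, ?_⟩
  · rw [show (3 : ℝ) = 1 + 2 by norm_num]
    exact mem_orliczDualBall_of_abs_le_div hM hx0 (fun k hk => (habs k hk).trans_le (hle k hk))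
      hnotMem hS.2
  · have hkS : k ∈ S := by
      by_contra hkS
      exact hk (hnotMem k hkS)
    exact ⟨e k, hie k hkS, hel k hkS, habs k hkS⟩
  · refine (Set.encard_le_encard (Set.support_indicator_subset)).trans ?_
    rw [Set.encard_coe_eq_coe_finsetCard, Nat.cast_le]
    exact hτ.card_le_ceil hM (fun k hk => (hx k hk).1.le) hS.2
  · calc (1 / 2 : ℝ) ≤ (∑ k ∈ S, M |x k|) / 2 := by linarith [hS.1]
      _ = ∑ k ∈ S, M |x k| / 2 := Finset.sum_div _ _ _
      _ ≤ ∑ k ∈ S, h k * x k := Finset.sum_le_sum fun k hk => by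
          rw [hmem k hk, mul_right_comm, sign_mul_self, mul_comm]
          exact hge k hk
      _ ≤ |∑' k, h k * x k| := by
          rw [tsum_eq_sum fun k hk => by rw [hnotMem k hk]; simp]
          exact le_abs_self _

theorem exists_mem_normingSequences (hM : IsOrlicz M) (hη : 0 ≤ η) (hτ : IsOrliczScale M η τ)
    (hl : ∀ i, (1 / 2) ^ l i < M (τ (i + 1)) / 2) {x : ℕ → ℝ} (hx : 1 < ∑' k, M (η * |x k|)) :
    ∃ i, ∃ h ∈ normingSequences M τ l i, min (τ 0) (1 / 2) ≤ |∑' k, h k * x k| := by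
  by_cases hlarge : ∃ k, τ 0 < |x k|
  · obtain ⟨k, hk⟩ := hlarge
    obtain ⟨h, hh, hle⟩ := exists_mem_normingSequences_of_lt (l := l) hM hτ hk
    exact ⟨0, h, hh, (min_le_left _ _).trans hle⟩
  · push Not at hlarge
    obtain ⟨i, S, hS, hsum⟩ :=
      exists_level_sum_mem_Ioc hM hη hτ (fun k => ⟨abs_nonneg (x k), hlarge k⟩) hx
    obtain ⟨h, hh, hle⟩ := exists_mem_normingSequences_of_level hM hτ (hl i) hS hsum
    exact ⟨i, h, hh, (min_le_right _ _).trans hle⟩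

end IsOrliczScale

theorem embedsHM_omega0_opow_omega0 (hM : IsOrlicz M) (hη : 0 < η)
    (h : Tendsto (fun t => M (η * t) / M t) (𝓝[>] 0) (𝓝 0)) : EmbedsHM M (ω ^ ω) := by
  obtain ⟨τ, hτ⟩ := hM.exists_isOrliczScale hη h
  choose l hl using fun i => exists_pow_lt_of_lt_one
    (half_pos (hM.pos _ (hτ.pos (i + 1)))) (one_half_lt_one (α := ℝ))
  have hcover : OrdinalCovers (ω ^ ω) (insert 0 (⋃ i, normingSequences M τ l i)) :=
    OrdinalCovers.insert_iUnion_opow_omega0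
      (fun i => OrdinalCovers.sparseExtensions
        (fun g hg k => indicator_mem_orliczDualBall hg (Set.Iio k))
        (finite_dyadicValues i (l i)) _ fun _ _ => rfl)
      (tendsto_normingSequences_smallSets M τ l)
  refine embedsHM_of_ordinalCovers hM three_pos
    (mul_pos hη (lt_min (hτ.pos 0) one_half_pos)) ⟨0, Set.mem_insert _ _⟩ ?_ hcover ?_
  · refine Set.insert_subset (fun x F _ => by simp) (Set.iUnion_subset fun i => ?_)
    exact fun g hg => hg.1
  · intro a _ r hr har
    have hrη : 0 < r * η := mul_pos hr hη
    have hx : 1 < ∑' k, M (η * |(r * η)⁻¹ * a k|) := by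
      refine har.trans_eq (tsum_congr fun k => ?_)
      rw [abs_mul, abs_of_pos (inv_pos.2 hrη)]
      congr 1
      field_simp
    obtain ⟨i, g, hg, hle⟩ := hτ.exists_mem_normingSequences hM hη.le hl hx
    refine ⟨g, .inr (Set.mem_iUnion.2 ⟨i, hg⟩), ?_⟩
    simp only [mul_left_comm _ (r * η)⁻¹, tsum_mul_left] at hle
    rw [abs_mul, abs_of_pos (inv_pos.2 hrη), inv_mul_eq_div, le_div_iff₀ hrη] at hle
    linarith

end NormingSequences

section ConvexCombinations

variable {K : Type*} [TopologicalSpace K]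

theorem map_nonneg_of_forall_lt {L : C(K, ℝ) →L[ℝ] ℝ} {ε u : ℝ} (hε : 0 < ε)
    (hL : ∀ f : C(K, ℝ), (∀ x, f x < ε) → L f < u) {f : C(K, ℝ)} (hf : 0 ≤ f) : 0 ≤ L f := by
  by_contra! hneg
  obtain ⟨n, hn⟩ := exists_nat_gt (u / -L f)
  have hlt := hL (-((n : ℝ) • f)) fun x =>
    (neg_nonpos.2 (mul_nonneg n.cast_nonneg (hf x))).trans_lt hε
  rw [div_lt_iff₀ (neg_pos.2 hneg)] at hn
  simp only [map_neg, map_smul, _root_.smul_eq_mul] at hlt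
  linarith

variable [CompactSpace K]

/-- Mathlib's Riesz representation theorem is stated for positive functionals on compactly supported
continuous functions; on a compact space these are all continuous functions. -/
theorem exists_measure_forall_integral_eq [T2Space K] [MeasurableSpace K] [BorelSpace K]
    (L : C(K, ℝ) →ₗ[ℝ] ℝ) (hL : ∀ f, 0 ≤ f → 0 ≤ L f) :
    ∃ μ : MeasureTheory.Measure K, MeasureTheory.IsFiniteMeasure μ ∧
      ∀ f : C(K, ℝ), ∫ x, f x ∂μ = L f := by
  let Λ : CompactlySupportedContinuousMap K ℝ →ₚ[ℝ] ℝ := PositiveLinearMap.mk₀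
    { toFun := fun f => L f.toContinuousMap
      map_add' := fun f g => L.map_add f.toContinuousMap g.toContinuousMap
      map_smul' := fun r f => L.map_smul r f.toContinuousMap }
    fun f hf => hL _ hf
  exact ⟨RealRMK.rieszMeasure Λ, inferInstance, fun f => RealRMK.integral_rieszMeasure Λ
    (CompactlySupportedContinuousMap.continuousMapEquiv f)⟩

theorem exists_forall_apply_lt_of_mem_convexHull [T2Space K] {ψ : ℕ → C(K, ℝ)}
    (h0 : ∀ i x, 0 ≤ ψ i x) (h1 : ∀ i x, ψ i x ≤ 1)
    (hlim : ∀ x, Tendsto (fun i => ψ i x) atTop (𝓝 0)) {ε : ℝ} (hε : 0 < ε) :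
    ∃ g ∈ convexHull ℝ (Set.range ψ), ∀ x, g x < ε := by
  by_contra! hcon
  let U : Set C(K, ℝ) := {f | ∀ x, f x < ε}
  have hUopen : IsOpen U := by
    simpa [Set.MapsTo] using
      ContinuousMap.isOpen_setOfPred_mapsTo (isCompact_univ (X := K)) (isOpen_Iio (a := ε))
  have hUconv : Convex ℝ U := fun f hf g hg a b ha hb hab x =>
    convex_Iio ε (hf x) (hg x) ha hb hab
  have hdisj : Disjoint U (convexHull ℝ (Set.range ψ)) :=
    Set.disjoint_left.2 fun g hgU hg => let ⟨x, hx⟩ := hcon g hg; hx.not_gt (hgU x)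
  obtain ⟨L, u, hLU, hLu⟩ :=
    geometric_hahn_banach_open hUconv hUopen (convex_convexHull ℝ _) hdisj
  have hu : 0 < u := by simpa using hLU 0 fun _ => hε
  borelize K
  obtain ⟨μ, _, hμ⟩ := exists_measure_forall_integral_eq L.toLinearMap
    fun f hf => map_nonneg_of_forall_lt hε hLU hf
  have hint : Tendsto (fun i => ∫ x, ψ i x ∂μ) atTop (𝓝 (∫ _, (0 : ℝ) ∂μ)) :=
    MeasureTheory.tendsto_integral_of_dominated_convergence (fun _ => 1)
      (fun i => (ψ i).continuous.aestronglyMeasurable) (MeasureTheory.integrable_const 1)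
      (fun i => .of_forall fun x => by simpa [abs_of_nonneg (h0 i x)] using h1 i x)
      (.of_forall hlim)
  rw [MeasureTheory.integral_zero] at hint
  refine hu.not_ge (ge_of_tendsto' hint fun i => ?_)
  rw [hμ]
  exact hLu _ (subset_convexHull ℝ _ (Set.mem_range_self i))

theorem exists_weights_sum_filter_lt_le [T2Space K] {f : ℕ → K → ℝ} {τ : ℕ → ℝ}
    (hcont : ∀ i, Continuous (f i)) (h0 : ∀ i x, 0 ≤ f i x) (hτ : ∀ i, 0 < τ i)
    (hlim : ∀ x, Tendsto (fun i => f i x / τ i) atTop (𝓝 0)) {ε : ℝ} (hε : 0 < ε) :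
    ∃ (F : Finset ℕ) (w : ℕ → ℝ), (∀ i ∈ F, 0 ≤ w i) ∧ ∑ i ∈ F, w i = 1 ∧
      ∀ x, ∑ i ∈ F with τ i < f i x, w i ≤ ε := by
  let ψ (i : ℕ) : C(K, ℝ) :=
    ⟨fun x => min 1 (f i x / τ i), continuous_const.min ((hcont i).div_const _)⟩
  have hψ0 (i : ℕ) (x : K) : 0 ≤ ψ i x := le_min zero_le_one (div_nonneg (h0 i x) (hτ i).le)
  have hψlim (x : K) : Tendsto (fun i => ψ i x) atTop (𝓝 0) := by
    simpa [ψ] using (tendsto_const_nhds (x := (1 : ℝ))).min (hlim x)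
  obtain ⟨g, hg, hgε⟩ := exists_forall_apply_lt_of_mem_convexHull hψ0
    (fun i x => min_le_left _ _) hψlim hε
  rw [convexHull_range_eq_exists_affineCombination] at hg
  obtain ⟨F, w, hw0, hw1, rfl⟩ := hg
  refine ⟨F, w, hw0, hw1, fun x => ?_⟩
  calc ∑ i ∈ F with τ i < f i x, w i
      = ∑ i ∈ F with τ i < f i x, w i * ψ i x := Finset.sum_congr rfl fun i hi => by
        simp [ψ, min_eq_left ((one_lt_div (hτ i)).2 (Finset.mem_filter.1 hi).2).le]
    _ ≤ ∑ i ∈ F, w i * ψ i x := Finset.sum_le_sum_of_subset_of_nonneg (Finset.filter_subset _ _)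
        fun i hi _ => mul_nonneg (hw0 i hi) (hψ0 i x)
    _ = F.affineCombination ℝ ψ w x := by
        simp [Finset.affineCombination_eq_linear_combination F ψ w hw1]
    _ ≤ ε := (hgε x).le

end ConvexCombinations

section ModularEstimates

variable {ι κ E : Type*} [SeminormedAddCommGroup E] [NormedSpace ℝ E] {M N : ℝ → ℝ} {c₁ c₂ : ℝ}

/-- The finite linear combinations of `v` are controlled by the modular `∑ N |c s|` in the way a
norm equivalent to the Orlicz norm is. Unlike for an embedding of `h_N`, `N` need not satisfy
`N 1 = 1`, so that the notion passes to differences of members of `v`. -/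
structure HasModularEstimates (N : ℝ → ℝ) (c₁ c₂ : ℝ) (v : ι → E) : Prop where
  le_norm_sum_smul (F : Finset ι) (c : ι → ℝ) :
    1 < ∑ s ∈ F, N |c s| → c₁ ≤ ‖∑ s ∈ F, c s • v s‖
  norm_sum_smul_le (F : Finset ι) (c : ι → ℝ) (ρ : ℝ) :
    0 < ρ → ∑ s ∈ F, N (|c s| / ρ) ≤ 1 → ‖∑ s ∈ F, c s • v s‖ ≤ c₂ * ρ

namespace HasModularEstimates

theorem comp_injective {v : ι → E} (h : HasModularEstimates N c₁ c₂ v) {e : κ → ι}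
    (he : Function.Injective e) : HasModularEstimates N c₁ c₂ (v ∘ e) where
  le_norm_sum_smul F c hc := by
    simpa [he.extend_apply] using
      h.le_norm_sum_smul (F.map ⟨e, he⟩) (Function.extend e c 0)
        (by simpa [he.extend_apply] using hc)
  norm_sum_smul_le F c ρ hρ hc := by
    simpa [he.extend_apply] using
      h.norm_sum_smul_le (F.map ⟨e, he⟩) (Function.extend e c 0) ρ hρ
        (by simpa [he.extend_apply] using hc)

theorem sub {v : κ ⊕ κ → E} (h : HasModularEstimates N c₁ c₂ v) :
    HasModularEstimates (fun t => 2 * N t) c₁ c₂ fun s => v (.inl s) - v (.inr s) where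
  le_norm_sum_smul F c hc := by
    have hsum := h.le_norm_sum_smul (F.disjSum F) (Sum.elim c (-c))
      (by simpa [Finset.sum_disjSum, Finset.sum_add_distrib, two_mul] using hc)
    simpa [Finset.sum_disjSum, smul_sub, ← sub_eq_add_neg] using hsum
  norm_sum_smul_le F c ρ hρ hc := by
    have hsum := h.norm_sum_smul_le (F.disjSum F) (Sum.elim c (-c)) ρ hρ
      (by simpa [Finset.sum_disjSum, Finset.sum_add_distrib, two_mul] using hc)
    simpa [Finset.sum_disjSum, smul_sub, ← sub_eq_add_neg] using hsum

theorem norm_le {v : ι → E} (h : HasModularEstimates N c₁ c₂ v) (hN : N 1 ≤ 1) (s : ι) :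
    ‖v s‖ ≤ c₂ := by
  simpa using h.norm_sum_smul_le {s} 1 1 one_pos (by simpa using hN)

end HasModularEstimates

theorem tsum_map_abs_indicator_div (hM0 : M 0 = 0) (F : Finset ℕ) (c : ℕ → ℝ) (ρ : ℝ) :
    ∑' k, M (|(F : Set ℕ).indicator c k| / ρ) = ∑ k ∈ F, M (|c k| / ρ) := by
  rw [tsum_eq_sum (s := F) fun k hk => by simp [hk, hM0]]
  exact Finset.sum_congr rfl fun k hk => by simp [hk]

theorem IsOrlicz.memHM_indicator (hM : IsOrlicz M) (F : Finset ℕ) (c : ℕ → ℝ) :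
    MemHM M ((F : Set ℕ).indicator c) :=
  hM.memHM_of_finite_support (F.finite_toSet.subset Set.support_indicator_subset)

theorem IsOrlicz.map_indicator_eq_sum (hM : IsOrlicz M) {T : (ℕ → ℝ) → E}
    (hadd : ∀ a b, MemHM M a → MemHM M b → T (a + b) = T a + T b)
    (hsmul : ∀ (c : ℝ) a, MemHM M a → T (c • a) = c • T a) (F : Finset ℕ) (c : ℕ → ℝ) :
    T ((F : Set ℕ).indicator c) = ∑ k ∈ F, c k • T (Pi.single k 1) := by
  have hsingle (k : ℕ) : MemHM M (Pi.single k 1) := hM.memHM_of_finite_support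
    ((Set.finite_singleton k).subset Pi.support_single_subset)
  induction F using Finset.induction_on with
  | empty => simpa [← Pi.zero_def] using hsmul 0 _ (hsingle 0)
  | insert k F hk ih =>
    have hck : MemHM M (c k • Pi.single k 1) := hM.memHM_of_finite_support
      ((Set.finite_singleton k).subset
        ((Function.support_const_smul_subset _ _).trans Pi.support_single_subset))
    have hsplit : ((insert k F : Finset ℕ) : Set ℕ).indicator c =
        c k • Pi.single k 1 + (F : Set ℕ).indicator c := by
      ext j
      by_cases hj : j = k
      · subst hj
        simp [hk]
      · simp [Set.indicator_apply, hj]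
    rw [Finset.sum_insert hk, ← ih, hsplit, hadd _ _ hck (hM.memHM_indicator F c),
      hsmul _ _ (hsingle k)]

theorem IsOrlicz.exists_hasModularEstimates (hM : IsOrlicz M) {α : Ordinal}
    (hα : EmbedsHM M α) :
    ∃ c₁ > 0, ∃ c₂ > 0, ∃ v : ℕ → COrd α, HasModularEstimates M c₁ c₂ v := by
  obtain ⟨T, hadd, hsmul, c₁, hc₁, c₂, hc₂, hT⟩ := hα
  refine ⟨c₁, hc₁, c₂, hc₂, fun k => T (Pi.single k 1), fun F c hc => ?_, fun F c ρ hρ hc => ?_⟩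
  all_goals
    rw [← hM.map_indicator_eq_sum hadd hsmul]
    have hmem := hM.memHM_indicator F c
  · have hnorm : 1 ≤ orliczNorm M ((F : Set ℕ).indicator c) :=
      hM.le_orliczNorm hmem.memOrliczHeart
        (by rw [tsum_map_abs_indicator_div hM.zero]; simpa using hc)
    exact (le_mul_of_one_le_right hc₁.le hnorm).trans (hT _ hmem).1
  · have hnorm : orliczNorm M ((F : Set ℕ).indicator c) ≤ ρ :=
      orliczNorm_le hρ ((tsum_map_abs_indicator_div hM.zero F c ρ).trans_le hc)
    exact (hT _ hmem).2.trans (mul_le_mul_of_nonneg_left hnorm hc₂.le)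

end ModularEstimates

section BlockSums

variable {ι K E : Type*} [SeminormedAddCommGroup E] [NormedSpace ℝ E] {N : ℝ → ℝ} {c₁ c₂ : ℝ}

theorem exists_injective_tendsto_sum_div [Countable K] {v : ℕ → K → ℝ}
    (hv : ∀ x, Tendsto (fun k => v k x) atTop (𝓝 0)) (m : ℕ → ℕ) (τ : ℕ → ℝ) :
    ∃ B : (Σ _ : ℕ, ℕ) → ℕ, Function.Injective B ∧
      ∀ x, Tendsto (fun i => (∑ r ∈ Finset.range (m i), |v (B ⟨i, r⟩) x|) / τ i) atTop (𝓝 0) := by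
  let f (i n : ℕ) (x : K) : ℝ := (∑ r ∈ Finset.range (m i), |v (Nat.pair i (n + r)) x|) / τ i
  have hf (i : ℕ) : Tendsto (f i) atTop (𝓝 0) := by
    refine tendsto_pi_nhds.2 fun x => ?_
    have hterm (r : ℕ) : Tendsto (fun n => |v (Nat.pair i (n + r)) x|) atTop (𝓝 0) := by
      have hpair : Tendsto (fun n => Nat.pair i (n + r)) atTop atTop :=
        tendsto_atTop_mono (fun n => (Nat.le_add_right n r).trans (Nat.right_le_pair _ _))
          tendsto_id
      simpa using ((hv x).comp hpair).abs
    simpa [f] using (tendsto_finsetSum (Finset.range (m i)) fun r _ => hterm r).div_const (τ i)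
  -- `K → ℝ` is metrizable because `K` is countable, so a diagonal sequence converges.
  obtain ⟨V, hV⟩ := (𝓝 (0 : K → ℝ)).exists_antitone_basis
  choose n hn using fun i => ((hf i).eventually (hV.mem i)).exists
  refine ⟨fun s => Nat.pair s.1 (n s.1 + s.2), ?_, tendsto_pi_nhds.1 (hV.tendsto hn)⟩
  rintro ⟨i, r⟩ ⟨j, q⟩ h
  obtain ⟨rfl, hrq⟩ := Nat.pair_eq_pair.1 h
  simpa using hrq

namespace HasModularEstimates

theorem exists_tendsto_zero [TopologicalSpace K] [Countable K]
    {v : ℕ → BoundedContinuousFunction K ℝ} (h : HasModularEstimates N c₁ c₂ v) (hN : N 1 ≤ 1) :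
    ∃ u : ℕ → BoundedContinuousFunction K ℝ,
      HasModularEstimates (fun t => 2 * N t) c₁ c₂ u ∧
      ∀ x, Tendsto (fun k => u k x) atTop (𝓝 0) := by
  have hmem (k : ℕ) : ⇑(v k) ∈ Set.univ.pi fun _ : K => Set.Icc (-c₂) c₂ := fun x _ =>
    abs_le.1 (((v k).norm_coe_le_norm x).trans (h.norm_le hN k))
  obtain ⟨_, -, φ, hφ, hlim⟩ :=
    (isCompact_univ_pi fun _ : K => isCompact_Icc).tendsto_subseq hmem
  let e : ℕ ⊕ ℕ → ℕ := φ ∘ Equiv.natSumNatEquivNat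
  have he : Function.Injective e := hφ.injective.comp Equiv.natSumNatEquivNat.injective
  refine ⟨_, (h.comp_injective he).sub, fun x => ?_⟩
  have hleft : Tendsto (fun k : ℕ => 2 * k) atTop atTop :=
    (strictMono_mul_left_of_pos two_pos).tendsto_atTop
  have hright : Tendsto (fun k : ℕ => 2 * k + 1) atTop atTop :=
    (tendsto_add_atTop_nat 1).comp hleft
  have hx := tendsto_pi_nhds.1 hlim x
  simpa [e] using (hx.comp hleft).sub (hx.comp hright)

theorem le_norm_sum_block {u : (Σ _ : ι, ℕ) → E} (h : HasModularEstimates N c₁ c₂ u)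
    (F : Finset ι) (n : ι → ℕ) {a : ι → ℝ} (ha : ∀ i, 0 ≤ a i)
    (hsum : 1 < ∑ i ∈ F, n i * N (a i)) :
    c₁ ≤ ‖∑ i ∈ F, ∑ r ∈ Finset.range (n i), a i • u ⟨i, r⟩‖ := by
  simpa [Finset.sum_sigma] using
    h.le_norm_sum_smul (F.sigma fun i => Finset.range (n i)) (fun s => a s.1)
      (by simpa [Finset.sum_sigma, abs_of_nonneg (ha _)] using hsum)

theorem norm_sum_block_le {u : (Σ _ : ι, ℕ) → E} (h : HasModularEstimates N c₁ c₂ u)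
    (F : Finset ι) (n : ι → ℕ) {a : ι → ℝ} (ha : ∀ i, 0 ≤ a i) {ρ : ℝ} (hρ : 0 < ρ)
    (hsum : ∑ i ∈ F, n i * N (a i / ρ) ≤ 1) :
    ‖∑ i ∈ F, ∑ r ∈ Finset.range (n i), a i • u ⟨i, r⟩‖ ≤ c₂ * ρ := by
  simpa [Finset.sum_sigma] using
    h.norm_sum_smul_le (F.sigma fun i => Finset.range (n i)) (fun s => a s.1) ρ hρ
      (by simpa [Finset.sum_sigma, abs_of_nonneg (ha _)] using hsum)

theorem norm_sum_block_le_add [TopologicalSpace K]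
    {u : (Σ _ : ι, ℕ) → BoundedContinuousFunction K ℝ} (h : HasModularEstimates N c₁ c₂ u)
    (hc₂ : 0 ≤ c₂) (F : Finset ι) {n : ι → ℕ} {a τ : ι → ℝ} (ha : ∀ i, 0 ≤ a i)
    (hτ : ∀ i, 0 ≤ τ i) {ρ : ℝ} (hρ : 0 < ρ)
    (hsum : ∀ x, ∑ i ∈ F with τ i < ∑ r ∈ Finset.range (n i), |u ⟨i, r⟩ x|,
      n i * N (a i / ρ) ≤ 1) :
    ‖∑ i ∈ F, ∑ r ∈ Finset.range (n i), a i • u ⟨i, r⟩‖ ≤ c₂ * ρ + ∑ i ∈ F, a i * τ i := by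
  have haτ (i : ι) : 0 ≤ a i * τ i := mul_nonneg (ha i) (hτ i)
  refine (BoundedContinuousFunction.norm_le
    (add_nonneg (by positivity) (Finset.sum_nonneg fun i _ => haτ i))).2 fun x => ?_
  -- Large blocks are estimated by the modular, the others by the triangle inequality.
  rw [← Finset.sum_filter_add_sum_filter_not F
    fun i => τ i < ∑ r ∈ Finset.range (n i), |u ⟨i, r⟩ x|, BoundedContinuousFunction.add_apply]
  refine (norm_add_le _ _).trans (add_le_add ?_ ?_)
  · exact (BoundedContinuousFunction.norm_coe_le_norm _ x).trans
      (h.norm_sum_block_le _ n ha hρ (hsum x))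
  · rw [BoundedContinuousFunction.sum_apply]
    refine (norm_sum_le _ _).trans ((Finset.sum_le_sum fun i hi => ?_).trans
      (Finset.sum_le_sum_of_subset_of_nonneg (Finset.filter_subset _ _) fun i _ _ => haτ i))
    rw [BoundedContinuousFunction.sum_apply]
    calc ‖∑ r ∈ Finset.range (n i), (a i • u ⟨i, r⟩) x‖
        ≤ ∑ r ∈ Finset.range (n i), a i * |u ⟨i, r⟩ x| :=
          (norm_sum_le _ _).trans_eq (by simp [abs_of_nonneg (ha i)])
      _ = a i * ∑ r ∈ Finset.range (n i), |u ⟨i, r⟩ x| := (Finset.mul_sum _ _ _).symm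
      _ ≤ a i * τ i :=
          mul_le_mul_of_nonneg_left (not_lt.1 (Finset.mem_filter.1 hi).2) (ha i)

end HasModularEstimates

end BlockSums

section Obstruction

variable {K : Type*} [TopologicalSpace K] {N : ℝ → ℝ} {c₁ c₂ : ℝ}

theorem sum_natCeil_two_mul_div_mul_le_one {ι : Type*} {S : Finset ι} {w p q : ι → ℝ} {δ : ℝ}
    (hδ : 0 < δ) (hp : ∀ i, 0 < p i) (hq : ∀ i, 0 ≤ q i) (hqp : ∀ i, δ * q i ≤ p i)
    (hw : ∀ i ∈ S, 0 ≤ w i) (hwS : ∑ i ∈ S, w i ≤ δ / 4) (hqS : ∑ i ∈ S, q i ≤ 1 / 2) :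
    ∑ i ∈ S, ⌈2 * w i / p i⌉₊ * q i ≤ 1 := by
  calc ∑ i ∈ S, ⌈2 * w i / p i⌉₊ * q i ≤ ∑ i ∈ S, (2 / δ * w i + q i) := by
        refine Finset.sum_le_sum fun i hi => ?_
        have hceil : (⌈2 * w i / p i⌉₊ : ℝ) ≤ 2 * w i / p i + 1 :=
          (Nat.ceil_lt_add_one (div_nonneg (mul_nonneg two_pos.le (hw i hi)) (hp i).le)).le
        have hratio : q i / p i ≤ 1 / δ := by
          rw [div_le_div_iff₀ (hp i) hδ]
          linarith [hqp i]
        calc ⌈2 * w i / p i⌉₊ * q i ≤ (2 * w i / p i + 1) * q i :=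
              mul_le_mul_of_nonneg_right hceil (hq i)
          _ = 2 * w i * (q i / p i) + q i := by ring
          _ ≤ 2 * w i * (1 / δ) + q i := by gcongr; linarith [hw i hi]
          _ = 2 / δ * w i + q i := by ring
    _ = 2 / δ * ∑ i ∈ S, w i + ∑ i ∈ S, q i := by
        rw [Finset.sum_add_distrib, ← Finset.mul_sum]
    _ ≤ 2 / δ * (δ / 4) + 1 / 2 := by gcongr
    _ = 1 := by field_simp; norm_num

theorem exists_forall_mul_le_of_not_tendsto {g : ℝ → ℝ} (hpos : ∀ t, 0 < t → 0 < N t)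
    (hN0 : Tendsto N (𝓝[>] 0) (𝓝 0)) (hg : ∀ t, 0 < t → 0 ≤ g t)
    (h : ¬ Tendsto (fun t => g t / N t) (𝓝[>] 0) (𝓝 0)) :
    ∃ δ > 0, ∃ t : ℕ → ℝ, ∀ i, 0 < t i ∧ δ * N (t i) ≤ g (t i) ∧
      N (t i) ≤ 1 / 2 * (1 / 2) ^ (i + 1) := by
  simp only [Metric.tendsto_nhds, not_forall, not_eventually] at h
  obtain ⟨δ, hδ, hfreq⟩ := h
  refine ⟨δ, hδ, ?_⟩
  choose t ht using fun i : ℕ => ((hfreq.and_eventually self_mem_nhdsWithin).and_eventually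
    (hN0.eventually_le_const (show (0 : ℝ) < 1 / 2 * (1 / 2) ^ (i + 1) by positivity))).exists
  refine ⟨t, fun i => ⟨(ht i).1.2, ?_, (ht i).2⟩⟩
  have hti : 0 < t i := (ht i).1.2
  have hdist := (ht i).1.1
  rwa [Real.dist_0_eq_abs, abs_of_nonneg (div_nonneg (hg _ hti) (hpos _ hti).le), not_lt,
    le_div_iff₀ (hpos _ hti)] at hdist

variable [CompactSpace K] [T2Space K] [Countable K] {v : ℕ → BoundedContinuousFunction K ℝ}

theorem exists_blocks_weights (hv : ∀ x, Tendsto (fun k => v k x) atTop (𝓝 0)) (m : ℕ → ℕ)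
    {τ : ℕ → ℝ} (hτ : ∀ i, 0 < τ i) {ε : ℝ} (hε : 0 < ε) :
    ∃ (B : (Σ _ : ℕ, ℕ) → ℕ) (F : Finset ℕ) (w : ℕ → ℝ), Function.Injective B ∧
      (∀ i ∈ F, 0 ≤ w i) ∧ ∑ i ∈ F, w i = 1 ∧ ∀ n : ℕ → ℕ, (∀ i ∈ F, n i ≤ m i) → ∀ x,
        ∑ i ∈ F with τ i < ∑ r ∈ Finset.range (n i), |v (B ⟨i, r⟩) x|, w i ≤ ε := by
  obtain ⟨B, hB, hlim⟩ := exists_injective_tendsto_sum_div hv m τ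
  obtain ⟨F, w, hw0, hw1, hw⟩ := exists_weights_sum_filter_lt_le
    (fun i => continuous_finsetSum _ fun r _ => (v (B ⟨i, r⟩)).continuous.abs)
    (fun i x => Finset.sum_nonneg fun r _ => abs_nonneg _) hτ hlim hε
  refine ⟨B, F, w, hB, hw0, hw1, fun n hnm x => ?_⟩
  refine (Finset.sum_le_sum_of_subset_of_nonneg (fun i hi => ?_)
    fun i hi _ => hw0 i (Finset.mem_filter.1 hi).1).trans (hw x)
  obtain ⟨hiF, hi⟩ := Finset.mem_filter.1 hi
  exact Finset.mem_filter.2 ⟨hiF, hi.trans_le (Finset.sum_le_sum_of_subset_of_nonneg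
    (Finset.range_mono (hnm i hiF)) fun r _ _ => abs_nonneg _)⟩

namespace HasModularEstimates

theorem le_mul_of_forall_mul_le (h : HasModularEstimates N c₁ c₂ v) (hc₂ : 0 ≤ c₂)
    (hv : ∀ x, Tendsto (fun k => v k x) atTop (𝓝 0)) (hpos : ∀ t, 0 < t → 0 < N t) {η δ : ℝ}
    (hη : 0 < η) (hδ : 0 < δ) {t : ℕ → ℝ} (ht : ∀ i, 0 < t i)
    (hle : ∀ i, δ * N (t i) ≤ N (η * t i)) (hsum : ∀ S : Finset ℕ, ∑ i ∈ S, N (t i) ≤ 1 / 2) :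
    c₁ ≤ c₂ * η := by
  refine le_of_forall_pos_le_add fun ε hε => ?_
  have ha (i : ℕ) : 0 < η * t i := mul_pos hη (ht i)
  have hp (i : ℕ) : 0 < N (η * t i) := hpos _ (ha i)
  let τ (i : ℕ) : ℝ := ε * (1 / 2) ^ (i + 1) / (η * t i)
  have hτ (i : ℕ) : 0 < τ i := div_pos (by positivity) (ha i)
  let m (i : ℕ) : ℕ := ⌈2 / N (η * t i)⌉₊
  obtain ⟨B, F, w, hB, hw0, hw1, hw⟩ := exists_blocks_weights hv m hτ (div_pos hδ four_pos)
  let n (i : ℕ) : ℕ := ⌈2 * w i / N (η * t i)⌉₊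
  have hnm (i : ℕ) (hi : i ∈ F) : n i ≤ m i := by
    have hwi : w i ≤ 1 := hw1 ▸ Finset.single_le_sum hw0 hi
    exact Nat.ceil_mono (div_le_div_of_nonneg_right (by linarith) (hp i).le)
  have hblocks := h.comp_injective hB
  have hlower : c₁ ≤ ‖∑ i ∈ F, ∑ r ∈ Finset.range (n i), (η * t i) • (v ∘ B) ⟨i, r⟩‖ := by
    refine hblocks.le_norm_sum_block F n (fun i => (ha i).le) ?_
    calc (1 : ℝ) < 2 * ∑ i ∈ F, w i := by rw [hw1]; norm_num
      _ = ∑ i ∈ F, 2 * w i := Finset.mul_sum _ _ _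
      _ ≤ ∑ i ∈ F, n i * N (η * t i) :=
        Finset.sum_le_sum fun i _ => (div_le_iff₀ (hp i)).1 (Nat.le_ceil _)
  have hupper : ‖∑ i ∈ F, ∑ r ∈ Finset.range (n i), (η * t i) • (v ∘ B) ⟨i, r⟩‖ ≤
      c₂ * η + ∑ i ∈ F, η * t i * τ i := by
    refine hblocks.norm_sum_block_le_add hc₂ F (fun i => (ha i).le) (fun i => (hτ i).le) hη
      fun x => ?_
    simp only [mul_div_cancel_left₀ _ hη.ne']
    exact sum_natCeil_two_mul_div_mul_le_one hδ hp (fun i => (hpos _ (ht i)).le) hle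
      (fun i hi => hw0 i (Finset.mem_filter.1 hi).1) (hw n hnm x) (hsum _)
  have hτsum : ∑ i ∈ F, η * t i * τ i ≤ ε := by
    simp only [τ, mul_div_cancel₀ _ (ha _).ne', ← Finset.mul_sum]
    exact mul_le_of_le_one_right hε.le (sum_geometric_two_succ_le_one F)
  exact hlower.trans (hupper.trans (add_le_add_right hτsum _))

theorem tendsto_div (h : HasModularEstimates N c₁ c₂ v) (hc₂ : 0 ≤ c₂)
    (hv : ∀ x, Tendsto (fun k => v k x) atTop (𝓝 0)) (hpos : ∀ t, 0 < t → 0 < N t)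
    (hN0 : Tendsto N (𝓝[>] 0) (𝓝 0)) {η : ℝ} (hη : 0 < η) (hηc : c₂ * η < c₁) :
    Tendsto (fun t => N (η * t) / N t) (𝓝[>] 0) (𝓝 0) := by
  by_contra hlim
  obtain ⟨δ, hδ, t, ht⟩ := exists_forall_mul_le_of_not_tendsto hpos hN0
    (fun t ht => (hpos _ (mul_pos hη ht)).le) hlim
  refine hηc.not_ge (h.le_mul_of_forall_mul_le hc₂ hv hpos hη hδ (fun i => (ht i).1)
    (fun i => (ht i).2.1) fun S => ?_)
  calc ∑ i ∈ S, N (t i) ≤ ∑ i ∈ S, 1 / 2 * (1 / 2 : ℝ) ^ (i + 1) :=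
        Finset.sum_le_sum fun i _ => (ht i).2.2
    _ ≤ 1 / 2 := by
        rw [← Finset.mul_sum]
        exact mul_le_of_le_one_right one_half_pos.le (sum_geometric_two_succ_le_one S)

end HasModularEstimates

end Obstruction

section CountableOrdinals

theorem omega0_opow_omega0_lt_omega1 : ω ^ ω < omega1 := by
  have h : ω < omega1 := by
    rw [omega1, Cardinal.lt_ord, Ordinal.card_omega0]
    exact Cardinal.aleph0_lt_aleph_one
  exact Ordinal.isPrincipal_opow_ord (Cardinal.aleph0_le_aleph 1) h h

theorem countable_Iic_of_lt_omega1 {α : Ordinal} (hα : α < omega1) : Countable (Set.Iic α) := by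
  have hsucc : Order.succ α < omega1 :=
    (Cardinal.isSuccLimit_ord (Cardinal.aleph0_le_aleph 1)).succ_lt hα
  rw [omega1, Cardinal.lt_ord, ← Cardinal.succ_aleph0, Order.lt_succ_iff] at hsucc
  rwa [← Order.Iio_succ, ← Cardinal.mk_le_aleph0_iff, Cardinal.mk_Iio_ordinal,
    Cardinal.lift_le_aleph0]

theorem IsOrlicz.exists_tendsto_of_embedsHM {M : ℝ → ℝ} (hM : IsOrlicz M) {α : Ordinal}
    (hα : α < omega1) (hemb : EmbedsHM M α) :
    ∃ η > 0, Tendsto (fun t => M (η * t) / M t) (𝓝[>] 0) (𝓝 0) := by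
  have := countable_Iic_of_lt_omega1 hα
  have : CompactSpace (Set.Iic α) := isCompact_iff_compactSpace.1 <| by
    simpa [← Set.Icc_bot] using isCompact_Icc (a := (⊥ : Ordinal)) (b := α)
  obtain ⟨c₁, hc₁, c₂, hc₂, v, hv⟩ := hM.exists_hasModularEstimates hemb
  obtain ⟨u, hu, hlim⟩ := hv.exists_tendsto_zero hM.one.le
  refine ⟨c₁ / (2 * c₂), by positivity, ?_⟩
  have hη : c₂ * (c₁ / (2 * c₂)) < c₁ := by
    field_simp
    norm_num
  have hN0 : Tendsto (fun t => 2 * M t) (𝓝[>] 0) (𝓝 0) := by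
    simpa using hM.tendsto_nhdsGT_zero.const_mul 2
  simpa only [mul_div_mul_left _ _ (two_ne_zero' ℝ)] using hu.tendsto_div hc₂.le hlim
    (fun t ht => mul_pos two_pos (hM.pos t ht)) hN0 (by positivity) hη

end CountableOrdinals

/-- For a nondegenerate Orlicz function `M`, the following are equivalent:
(1) there is `η > 0` with `lim_{t→0} M(ηt)/M(t) = 0`;
(2) `h_M` embeds isomorphically into `C(ω^ω)`;
(3) `h_M` embeds isomorphically into `C(α)` for some countable ordinal `α`. -/
theorem orlicz_embedding_tfae (M : ℝ → ℝ) (hM : IsOrlicz M) :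
    ((∃ η > (0 : ℝ), Tendsto (fun t => M (η * t) / M t) (𝓝[>] (0 : ℝ)) (𝓝 0)) ↔
      EmbedsHM M (Ordinal.omega0 ^ Ordinal.omega0)) ∧
    (EmbedsHM M (Ordinal.omega0 ^ Ordinal.omega0) ↔
      ∃ α : Ordinal, α < omega1 ∧ EmbedsHM M α) := by
  have himp (hη : ∃ η > (0 : ℝ), Tendsto (fun t => M (η * t) / M t) (𝓝[>] (0 : ℝ)) (𝓝 0)) :
      EmbedsHM M (ω ^ ω) :=
    let ⟨_, hη, hlim⟩ := hη
    embedsHM_omega0_opow_omega0 hM hη hlim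
  refine ⟨⟨himp, hM.exists_tendsto_of_embedsHM omega0_opow_omega0_lt_omega1⟩,
    fun h => ⟨_, omega0_opow_omega0_lt_omega1, h⟩, ?_⟩
  rintro ⟨α, hα, h⟩
  exact himp (hM.exists_tendsto_of_embedsHM hα h)
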